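/- arXiv:1810.13176 — 6 statements merged into one kernel-verified Lean document; each statement's English description precedes it below -/
import Mathlib

section
/- Let M ≥ 2 and N ≥ 2 be integers. The set of pairs of integers (X,Y) ∈ ℤ² satisfying (X ≥ 0 or Y ≥ 0), Y − X + (M−1) > 0, and 2Y − X − (N−1) < 0 is finite, and its cardinality equals (M+N−2)(M+N−3)/2 + (M−1)(M−2)/2. -/
/-- The region `Q_{M,N}`: integer points `(X,Y)` in the union of the half planes
`X ≥ 0` and `Y ≥ 0` satisfying `Y - X + (M-1) > 0` and `2Y - X - (N-1) < 0`. -/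
def regionQ (M N : ℕ) : Set (ℤ × ℤ) :=
  {z : ℤ × ℤ | (0 ≤ z.1 ∨ 0 ≤ z.2) ∧
    0 < z.2 - z.1 + ((M : ℤ) - 1) ∧
    2 * z.2 - z.1 - ((N : ℤ) - 1) < 0}

/-!
The line `Y = 0` cuts `Q_{M,N}` into two triangles. As long as these numbers are positive, the row
at height `Y ≥ 0` has `M + N - 3 - Y` points and the row at height `Y < 0` has `M - 1 + Y`. In both
parts the row length changes by one from each row to the next, so unimodular affine maps carry them
to the standard triangles `0 ≤ j < i < n` with `n = M + N - 2` and `n = M - 1`.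
-/

open Finset

/-- The standard lattice triangle `0 ≤ j < i < n`, the model for both parts of `regionQ`. It
lives in `ℤ × ℤ`, rather than `ℕ × ℕ`, so that affine automorphisms of the lattice act. -/
noncomputable def latticeTriangle (n : ℕ) : Finset (ℤ × ℤ) :=
  {p ∈ Ico 0 (n : ℤ) ×ˢ Ico 0 (n : ℤ) | p.2 < p.1}

theorem mem_latticeTriangle {n : ℕ} {p : ℤ × ℤ} :
    p ∈ latticeTriangle n ↔ 0 ≤ p.2 ∧ p.2 < p.1 ∧ p.1 < n := by
  simp only [latticeTriangle, mem_filter, mem_product, mem_Ico]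
  omega

theorem latticeTriangle_succ (n : ℕ) :
    latticeTriangle (n + 1) = {(n : ℤ)} ×ˢ Ico 0 (n : ℤ) ∪ latticeTriangle n := by
  ext p
  simp only [mem_union, mem_product, mem_singleton, mem_Ico, mem_latticeTriangle]
  omega

theorem card_latticeTriangle (n : ℕ) : #(latticeTriangle n) = n.choose 2 := by
  induction n with
  | zero => rfl
  | succ n ih =>
    have new_row_disjoint : Disjoint ({(n : ℤ)} ×ˢ Ico 0 (n : ℤ)) (latticeTriangle n) := by
      simp only [disjoint_left, mem_product, mem_singleton, mem_latticeTriangle]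
      omega
    calc #(latticeTriangle (n + 1))
        = #({(n : ℤ)} ×ˢ Ico 0 (n : ℤ)) + #(latticeTriangle n) := by
          rw [latticeTriangle_succ, card_union_of_disjoint new_row_disjoint]
      _ = n.choose 1 + n.choose 2 := by simp [ih]
      _ = (n + 1).choose 2 := (Nat.choose_succ_succ' n 1).symm

/-- The affine automorphism of `ℤ × ℤ` that carries the standard triangle to the part `Y ≥ 0` of
`regionQ`: `i` counts rows downwards from the apex and `j` is the position within the row. -/
def upperEquiv (M N : ℤ) : ℤ × ℤ ≃ ℤ × ℤ where
  toFun p := (p.2 + 2 * (M + N - 3 - p.1) - N + 2, M + N - 3 - p.1)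
  invFun z := (M + N - 3 - z.2, z.1 - 2 * z.2 + N - 2)
  left_inv p := by ext <;> ring
  right_inv z := by ext <;> ring

/-- The affine automorphism of `ℤ × ℤ` that carries the standard triangle to the part `Y < 0` of
`regionQ`: `i` counts rows upwards from the apex and `j` is the position within the row. -/
def lowerEquiv (M : ℤ) : ℤ × ℤ ≃ ℤ × ℤ where
  toFun p := (p.2, p.1 - M + 1)
  invFun z := (z.2 + M - 1, z.1)
  left_inv p := by ext <;> ring
  right_inv z := by ext <;> ring

/-- The part `Y ≥ 0` of `regionQ M N`. -/
noncomputable def upperTriangle (M N : ℕ) : Finset (ℤ × ℤ) :=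
  (latticeTriangle (M + N - 2)).map (upperEquiv M N).toEmbedding

/-- The part `Y < 0` of `regionQ M N`, which does not depend on `N`. -/
noncomputable def lowerTriangle (M : ℕ) : Finset (ℤ × ℤ) :=
  (latticeTriangle (M - 1)).map (lowerEquiv M).toEmbedding

theorem mem_upperTriangle {M N : ℕ} {z : ℤ × ℤ} :
    z ∈ upperTriangle M N ↔
      0 ≤ z.2 ∧ 0 < z.2 - z.1 + ((M : ℤ) - 1) ∧ 2 * z.2 - z.1 - ((N : ℤ) - 1) < 0 := by
  simp only [upperTriangle, mem_map_equiv, mem_latticeTriangle, upperEquiv, Equiv.coe_fn_symm_mk]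
  omega

theorem mem_lowerTriangle {M : ℕ} {z : ℤ × ℤ} :
    z ∈ lowerTriangle M ↔ z.2 < 0 ∧ 0 ≤ z.1 ∧ 0 < z.2 - z.1 + ((M : ℤ) - 1) := by
  simp only [lowerTriangle, mem_map_equiv, mem_latticeTriangle, lowerEquiv, Equiv.coe_fn_symm_mk]
  omega

theorem disjoint_upperTriangle_lowerTriangle (M N : ℕ) :
    Disjoint (upperTriangle M N) (lowerTriangle M) :=
  disjoint_left.2 fun _ hu hl => (mem_lowerTriangle.1 hl).1.not_ge (mem_upperTriangle.1 hu).1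

theorem regionQ_eq_upperTriangle_union_lowerTriangle (M N : ℕ) :
    regionQ M N = ↑(upperTriangle M N ∪ lowerTriangle M) := by
  ext z
  simp only [regionQ, Set.mem_ofPred_eq, mem_coe, mem_union, mem_upperTriangle, mem_lowerTriangle]
  omega

theorem finite_regionQ (M N : ℕ) : (regionQ M N).Finite := by
  rw [regionQ_eq_upperTriangle_union_lowerTriangle]
  exact finite_toSet _

theorem ncard_regionQ (M N : ℕ) :
    (regionQ M N).ncard = (M + N - 2).choose 2 + (M - 1).choose 2 := by
  rw [regionQ_eq_upperTriangle_union_lowerTriangle, Set.ncard_coe_finset,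
    card_union_of_disjoint (disjoint_upperTriangle_lowerTriangle M N), upperTriangle,
    lowerTriangle, card_map, card_map, card_latticeTriangle, card_latticeTriangle]

theorem stmt_0 (M N : ℕ) (hM : 2 ≤ M) (hN : 2 ≤ N) :
    (regionQ M N).Finite ∧
      (regionQ M N).ncard =
        (M + N - 2) * (M + N - 3) / 2 + (M - 1) * (M - 2) / 2 := by
  refine ⟨finite_regionQ M N, ?_⟩
  rw [ncard_regionQ, Nat.choose_two_right, Nat.choose_two_right, Nat.sub_sub, Nat.sub_sub]
end

section
/- Let p, q ∈ 𝒫 and let φ : U → ℂ² be a complex-analytic map on an open neighborhood U of 0 in ℂ² with φ(0) = 0 and differential at 0 equal to the identity, satisfying N_p(φ(z)) = N_q(z) for all z ∈ U. Assume φ is dicritical, meaning: either φ = id near 0, or, letting ν+1 ≥ 2 be the smallest total degree of a nonvanishing homogeneous term of the Taylor expansion of φ − id at 0 and (P,Q) that homogeneous term (a pair of homogeneous polynomials of degree ν+1), the polynomial x·Q(x,y) − y·P(x,y) is identically zero. Then N_p = N_q as polynomials. -/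
open MvPolynomial Asymptotics

/-- The normal form `N_p` as a polynomial in `ℂ[x,y]`. -/
noncomputable def Npoly (M N : ℕ) (a b : ℕ → ℕ → ℂ) : MvPolynomial (Fin 2) ℂ :=
  X 0 * X 1 * (X 1 + X 0 ^ 2) *
    (∏ i ∈ Finset.Icc 1 (N - 1),
      (X 1 + ∑ k ∈ Finset.Icc 1 i, C (a k i) * X 0 * X 1 ^ (k - 1))) *
    (∏ i ∈ Finset.Icc 1 (M - 2),
      (X 1 + ∑ k ∈ Finset.Icc 1 (N - 1 + 2 * i), C (b k i) * X 0 ^ (k + 1)))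

/-- Evaluation of the normal form at a point of `ℂ²`. -/
noncomputable def Nfun (M N : ℕ) (a b : ℕ → ℕ → ℂ) (z : ℂ × ℂ) : ℂ :=
  eval ![z.1, z.2] (Npoly M N a b)

/-- The parameter space `𝒫`. -/
def memP (M N : ℕ) (a b : ℕ → ℕ → ℂ) : Prop :=
  (∀ i ∈ Finset.Icc 1 (N - 1), a 1 i ≠ 0) ∧
  (∀ i ∈ Finset.Icc 1 (M - 2), b 1 i ≠ 0 ∧ b 1 i ≠ 1) ∧
  (∀ i ∈ Finset.Icc 1 (N - 1), ∀ j ∈ Finset.Icc 1 (N - 1), i ≠ j → a 1 i ≠ a 1 j) ∧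
  (∀ i ∈ Finset.Icc 1 (M - 2), ∀ j ∈ Finset.Icc 1 (M - 2), i ≠ j → b 1 i ≠ b 1 j)

/-!
In the chart `(x, y) = (s * t, t)` of the blow-up of the origin, `N_p` becomes
`t ^ (M + N) * s * A(s, t) * B(s, t)`. The factor `A` comes from the branches transverse to `y = 0`:
it has degree `N - 1` in `s`, also after setting `t = 0`, and `A(0, t) = 1`. The factor `B` comes
from the branches tangent to `y = 0`: apart from `1`, its monomials `s ^ m * t ^ k` satisfy
`0 < k < m`.

A dicritical `φ ≠ id` moves points radially to leading order, so it lifts to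
`(s, t) ↦ (s + o(t ^ ν), t * (1 + r(s) * t ^ ν + o(t ^ ν)))` with `deg r ≤ ν`. Thus `N_p ∘ φ = N_q`
gives `A' * B' - A * B ≡ (M + N) * r(s) * A(s, 0) * t ^ ν` modulo `t ^ (ν + 1)`. Inductively on
`k ≤ ν`, the coefficient of `t ^ k` reads `u + A(s, 0) * v = A(s, 0) * g`, where
`deg u ≤ deg A(s, 0)`, `u(0) = 0`, `s ^ (k + 1) ∣ v` and `deg g ≤ k`, and this forces
`u = v = g = 0`. Hence `r = 0`, so a dicritical `φ` conjugating the two normal forms is the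
identity.
-/

section Rigidity

open scoped Polynomial Polynomial.Bivariate

variable {R : Type*} [CommRing R]

lemma coeff_mul_sub_mul_of_X_pow_dvd {A A' B B' : R[X]} {k : ℕ}
    (hA : Polynomial.X ^ k ∣ A' - A) (hB : Polynomial.X ^ k ∣ B' - B) :
    (A' * B' - A * B).coeff k =
      (A' - A).coeff k * B'.coeff 0 + A.coeff 0 * (B' - B).coeff k := by
  obtain ⟨u, hu⟩ := hA
  obtain ⟨v, hv⟩ := hB
  have hsplit : A' * B' - A * B = Polynomial.X ^ k * (u * B' + A * v) := by
    linear_combination B' * hu + A * hv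
  simp only [hsplit, hu, hv, Polynomial.coeff_X_pow_mul', le_refl, if_true, Nat.sub_self,
    Polynomial.coeff_add, Polynomial.mul_coeff_zero]

lemma X_pow_succ_dvd_of_coeff_eq_zero {S : Type*} [Semiring S] {p : S[X]} {k : ℕ}
    (h : Polynomial.X ^ k ∣ p) (hk : p.coeff k = 0) : Polynomial.X ^ (k + 1) ∣ p := by
  rw [Polynomial.X_pow_dvd_iff] at h ⊢
  intro j hj
  rcases Nat.lt_succ_iff_lt_or_eq.mp hj with hlt | rfl
  exacts [h j hlt, hk]

/-- Besides the constant term `1`, every monomial `x ^ m * y ^ k` of `f` satisfies `k < m` and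
`0 < k`. -/
structure IsSteep (f : R[X][Y]) : Prop where
  coeff_zero : f.coeff 0 = 1
  X_pow_dvd_coeff : ∀ k, Polynomial.X ^ (k + 1) ∣ (f - 1).coeff k

namespace IsSteep

lemma one : IsSteep (1 : R[X][Y]) := ⟨by simp, by simp⟩

lemma mul {f g : R[X][Y]} (hf : IsSteep f) (hg : IsSteep g) : IsSteep (f * g) := by
  refine ⟨by rw [Polynomial.mul_coeff_zero, hf.coeff_zero, hg.coeff_zero, one_mul], fun k => ?_⟩
  have hsplit : f * g - 1 = (f - 1) * (g - 1) + (f - 1) + (g - 1) := by ring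
  rw [hsplit, Polynomial.coeff_add, Polynomial.coeff_add]
  refine dvd_add (dvd_add ?_ (hf.X_pow_dvd_coeff k)) (hg.X_pow_dvd_coeff k)
  rw [Polynomial.coeff_mul]
  refine Finset.dvd_sum fun ij hij => ?_
  rw [Finset.HasAntidiagonal.mem_antidiagonal] at hij
  calc (Polynomial.X : R[X]) ^ (k + 1) ∣ Polynomial.X ^ (ij.1 + 1 + (ij.2 + 1)) :=
        pow_dvd_pow _ (by omega)
    _ ∣ (f - 1).coeff ij.1 * (g - 1).coeff ij.2 := by
        rw [pow_add]
        exact mul_dvd_mul (hf.X_pow_dvd_coeff _) (hg.X_pow_dvd_coeff _)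

lemma prod {ι : Type*} {S : Finset ι} {f : ι → R[X][Y]} (hf : ∀ i ∈ S, IsSteep (f i)) :
    IsSteep (∏ i ∈ S, f i) :=
  Finset.prod_induction f IsSteep (fun _ _ => mul) one hf

end IsSteep

/-- `f` has degree at most `n` in the inner variable `x` and restricts to `1` on the line
`x = 0`. -/
structure IsNormalized (n : ℕ) (f : R[X][Y]) : Prop where
  natDegree_coeff_le : ∀ k, (f.coeff k).natDegree ≤ n
  map_eval_zero : f.map (Polynomial.evalRingHom 0) = 1

namespace IsNormalized

lemma eval_zero_coeff {n : ℕ} {f : R[X][Y]} (hf : IsNormalized n f) (k : ℕ) :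
    (f.coeff k).eval 0 = (1 : R[X]).coeff k := by
  rw [← hf.map_eval_zero, Polynomial.coeff_map, Polynomial.coe_evalRingHom]

lemma one : IsNormalized 0 (1 : R[X][Y]) :=
  ⟨by simp [Polynomial.coeff_one, apply_ite], by simp⟩

lemma mul {f g : R[X][Y]} {m n : ℕ} (hf : IsNormalized m f) (hg : IsNormalized n g) :
    IsNormalized (m + n) (f * g) := by
  refine ⟨fun k => ?_, by rw [Polynomial.map_mul, hf.map_eval_zero, hg.map_eval_zero, one_mul]⟩
  rw [Polynomial.coeff_mul]
  exact Polynomial.natDegree_sum_le_of_forall_le _ _ fun ij _ =>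
    Polynomial.natDegree_mul_le.trans
      (add_le_add (hf.natDegree_coeff_le ij.1) (hg.natDegree_coeff_le ij.2))

lemma prod {ι : Type*} {S : Finset ι} {f : ι → R[X][Y]} {n : ι → ℕ}
    (hf : ∀ i ∈ S, IsNormalized (n i) (f i)) :
    IsNormalized (∑ i ∈ S, n i) (∏ i ∈ S, f i) := by
  induction S using Finset.cons_induction with
  | empty => exact one
  | cons i S hi ih =>
    rw [Finset.prod_cons, Finset.sum_cons]
    exact (hf i (Finset.mem_cons_self i S)).mul
      (ih fun j hj => hf j (Finset.mem_cons_of_mem hj))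

end IsNormalized

variable [IsDomain R]

lemma eq_zero_of_add_mul_eq_mul {A u v g : R[X]} {k : ℕ} (hA : A.eval 0 ≠ 0)
    (hu : u.natDegree ≤ A.natDegree) (hu0 : u.eval 0 = 0) (hv : Polynomial.X ^ (k + 1) ∣ v)
    (hg : g.natDegree ≤ k) (h : u + A * v = A * g) : u = 0 ∧ v = 0 ∧ g = 0 := by
  have hA0 : A ≠ 0 := by rintro rfl; simp at hA
  have hu_eq : u = A * (g - v) := by linear_combination h
  -- By degree `u` is a constant multiple of `A`, and `A` does not vanish at `0` whereas `u` does.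
  have hgv : g - v = 0 := by
    by_contra hne
    have hdeg : (g - v).natDegree = 0 := by
      rw [hu_eq, Polynomial.natDegree_mul hA0 hne] at hu
      omega
    rw [hu_eq, Polynomial.eval_mul, mul_eq_zero_iff_left hA] at hu0
    rw [Polynomial.eq_C_of_natDegree_eq_zero hdeg, Polynomial.eval_C] at hu0
    exact hne (by rw [Polynomial.eq_C_of_natDegree_eq_zero hdeg, hu0, map_zero])
  obtain rfl : g = v := sub_eq_zero.mp hgv
  have hg0 : g = 0 := Polynomial.eq_zero_of_dvd_of_natDegree_lt hv <| by
    rw [Polynomial.natDegree_X_pow]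
    omega
  exact ⟨by rw [hu_eq, hgv, mul_zero], hg0, hg0⟩

lemma coeff_sub_eq_zero_of_coeff_mul_sub_mul {A A' B B' : R[X][Y]} {n k : ℕ} {g : R[X]}
    (hA : IsNormalized n A) (hA0 : (A.coeff 0).natDegree = n) (hA' : IsNormalized n A')
    (hB : IsSteep B) (hB' : IsSteep B') (hAk : Y ^ k ∣ A' - A) (hBk : Y ^ k ∣ B' - B)
    (hg : g.natDegree ≤ k) (h : (A' * B' - A * B).coeff k = A.coeff 0 * g) :
    (A' - A).coeff k = 0 ∧ (B' - B).coeff k = 0 ∧ g = 0 := by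
  refine eq_zero_of_add_mul_eq_mul (A := A.coeff 0) ?_ ?_ ?_ ?_ hg ?_
  · simp [hA.eval_zero_coeff]
  · rw [hA0, Polynomial.coeff_sub]
    exact (Polynomial.natDegree_sub_le _ _).trans
      (max_le (hA'.natDegree_coeff_le k) (hA.natDegree_coeff_le k))
  · rw [Polynomial.coeff_sub, Polynomial.eval_sub, hA.eval_zero_coeff, hA'.eval_zero_coeff,
      sub_self]
  · rw [← sub_sub_sub_cancel_right B' B 1, Polynomial.coeff_sub]
    exact dvd_sub (hB'.X_pow_dvd_coeff k) (hB.X_pow_dvd_coeff k)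
  · rw [← h, coeff_mul_sub_mul_of_X_pow_dvd hAk hBk, hB'.coeff_zero, mul_one]

theorem eq_zero_of_Y_pow_succ_dvd_mul_sub_mul {A A' B B' : R[X][Y]} {n ν : ℕ} {g : R[X]}
    (hA : IsNormalized n A) (hA0 : (A.coeff 0).natDegree = n) (hA' : IsNormalized n A')
    (hB : IsSteep B) (hB' : IsSteep B') (hg : g.natDegree ≤ ν)
    (h : Y ^ (ν + 1) ∣ A' * B' - A * B - Polynomial.C (A.coeff 0 * g) * Y ^ ν) : g = 0 := by
  have hcoeff : ∀ k ≤ ν,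
      (A' * B' - A * B).coeff k = A.coeff 0 * if k = ν then g else 0 := by
    intro k hk
    have hk0 := Polynomial.X_pow_dvd_iff.mp h k (Nat.lt_succ_of_le hk)
    rw [Polynomial.coeff_sub, Polynomial.coeff_C_mul_X_pow, sub_eq_zero] at hk0
    rw [hk0, mul_ite, mul_zero]
  have hagree : ∀ k ≤ ν, Y ^ k ∣ A' - A ∧ Y ^ k ∣ B' - B := by
    intro k
    induction k with
    | zero => simp
    | succ k ih =>
      intro hk
      obtain ⟨hAk, hBk⟩ := ih (by omega)
      have hk_coeff := hcoeff k (by omega)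
      rw [if_neg (by omega)] at hk_coeff
      obtain ⟨hA_coeff, hB_coeff, -⟩ :=
        coeff_sub_eq_zero_of_coeff_mul_sub_mul hA hA0 hA' hB hB' hAk hBk (by simp) hk_coeff
      exact ⟨X_pow_succ_dvd_of_coeff_eq_zero hAk hA_coeff,
        X_pow_succ_dvd_of_coeff_eq_zero hBk hB_coeff⟩
  have hν_coeff := hcoeff ν le_rfl
  rw [if_pos rfl] at hν_coeff
  exact (coeff_sub_eq_zero_of_coeff_mul_sub_mul hA hA0 hA' hB hB' (hagree ν le_rfl).1
    (hagree ν le_rfl).2 hg hν_coeff).2.2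

end Rigidity

section BlowUp

open scoped Polynomial Polynomial.Bivariate

variable {R : Type*} [CommRing R]

/-- The pullback of bivariate polynomials along the chart `(s, t) ↦ (s * t, t)` of the blow-up of
the origin; the inner variable of `R[X][Y]` is `s`, the outer one is `t`. -/
noncomputable def blowUp : MvPolynomial (Fin 2) R →ₐ[R] R[X][Y] :=
  aeval ![Polynomial.C Polynomial.X * Y, Y]

lemma blowUp_X_zero : blowUp (X 0 : MvPolynomial (Fin 2) R) = Polynomial.C Polynomial.X * Y := by
  simp [blowUp]

lemma blowUp_X_one : blowUp (X 1 : MvPolynomial (Fin 2) R) = Y := by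
  simp [blowUp]

lemma evalEval_blowUp (f : MvPolynomial (Fin 2) R) (s t : R) :
    (blowUp f).evalEval s t = eval ![s * t, t] f := by
  induction f using MvPolynomial.induction_on with
  | C c => simp [blowUp]
  | add p q hp hq => simp only [map_add, Polynomial.evalEval_add, hp, hq]
  | mul_X p i hp =>
    fin_cases i <;>
      simp [Polynomial.evalEval_mul, Polynomial.evalEval_C, hp, blowUp_X_zero, blowUp_X_one]

/-- The strict transform of the curve `y + x * α(y) = 0`, which is transverse to `y = 0` when
`α(0) ≠ 0`. -/
noncomputable def transverseBranch (α : R[X]) : R[X][Y] :=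
  1 + Polynomial.C Polynomial.X * α.map Polynomial.C

/-- The strict transform of the curve `y + x * β(x) = 0`, which is tangent to `y = 0` when
`β(0) = 0`. -/
noncomputable def tangentBranch (β : R[X]) : R[X][Y] :=
  1 + Polynomial.C Polynomial.X *
    (β.map Polynomial.C).comp (Polynomial.C Polynomial.X * Y)

lemma blowUp_X_one_add_X_zero_mul_aeval_X_one (α : R[X]) :
    blowUp (X 1 + X 0 * Polynomial.aeval (X 1) α) = Y * transverseBranch α := by
  rw [map_add, map_mul, ← Polynomial.aeval_algHom_apply, blowUp_X_zero, blowUp_X_one,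
    transverseBranch, show Polynomial.aeval Y α = α.map Polynomial.C from
      Polynomial.aeval_X_left_eq_map α]
  ring

lemma blowUp_X_one_add_X_zero_mul_aeval_X_zero (β : R[X]) :
    blowUp (X 1 + X 0 * Polynomial.aeval (X 0) β) = Y * tangentBranch β := by
  rw [map_add, map_mul, ← Polynomial.aeval_algHom_apply, blowUp_X_zero, blowUp_X_one,
    tangentBranch, Polynomial.comp, Polynomial.eval₂_map, Polynomial.aeval_def,
    show algebraMap R R[X][Y] = Polynomial.C.comp Polynomial.C from rfl]
  ring

lemma isNormalized_transverseBranch (α : R[X]) : IsNormalized 1 (transverseBranch α) := by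
  refine ⟨fun k => ?_, by simp [transverseBranch]⟩
  rw [transverseBranch, Polynomial.coeff_add, Polynomial.coeff_C_mul, Polynomial.coeff_map]
  refine Polynomial.natDegree_add_le_of_degree_le ?_ ?_
  · simp [Polynomial.coeff_one, apply_ite]
  · exact (Polynomial.natDegree_mul_C_le _ _).trans Polynomial.natDegree_X_le

lemma coeff_zero_transverseBranch (α : R[X]) :
    (transverseBranch α).coeff 0 =
      Polynomial.C (α.coeff 0) * Polynomial.X + Polynomial.C 1 := by
  rw [transverseBranch, Polynomial.coeff_add, Polynomial.coeff_C_mul, Polynomial.coeff_map,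
    Polynomial.coeff_one_zero, map_one]
  ring

lemma isSteep_tangentBranch {β : R[X]} (hβ : β.coeff 0 = 0) : IsSteep (tangentBranch β) := by
  have hcoeff (k : ℕ) : (tangentBranch β - 1).coeff k =
      Polynomial.X ^ (k + 1) * Polynomial.C (β.coeff k) := by
    rw [tangentBranch, add_sub_cancel_left, Polynomial.coeff_C_mul,
      Polynomial.comp_C_mul_X_coeff, Polynomial.coeff_map, pow_succ']
    ring
  refine ⟨?_, fun k => hcoeff k ▸ dvd_mul_right _ _⟩
  rw [← sub_add_cancel (tangentBranch β) 1, Polynomial.coeff_add, hcoeff, hβ]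
  simp

end BlowUp

section NormalForm

open scoped Polynomial Polynomial.Bivariate

/-- The polynomial `α` for which `y + x * α(y)` is the `i`-th factor of `N_p` with coefficients
`a k i`. -/
noncomputable def transverseJet (a : ℕ → ℕ → ℂ) (i : ℕ) : ℂ[X] :=
  ∑ k ∈ Finset.Icc 1 i, Polynomial.C (a k i) * Polynomial.X ^ (k - 1)

/-- The polynomial `β` for which `y + x * β(x)` is the `i`-th factor of `N_p` with coefficients
`b k i`. -/
noncomputable def tangentJet (N : ℕ) (b : ℕ → ℕ → ℂ) (i : ℕ) : ℂ[X] :=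
  ∑ k ∈ Finset.Icc 1 (N - 1 + 2 * i), Polynomial.C (b k i) * Polynomial.X ^ k

/-- The strict transform of the product of the factors of `N_p` involving the `a k i`. -/
noncomputable def transversePart (N : ℕ) (a : ℕ → ℕ → ℂ) : ℂ[X][Y] :=
  ∏ i ∈ Finset.Icc 1 (N - 1), transverseBranch (transverseJet a i)

/-- The strict transform of the product of `y + x ^ 2` and the factors of `N_p` involving the
`b k i`. -/
noncomputable def tangentPart (M N : ℕ) (b : ℕ → ℕ → ℂ) : ℂ[X][Y] :=
  tangentBranch Polynomial.X *
    ∏ i ∈ Finset.Icc 1 (M - 2), tangentBranch (tangentJet N b i)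

lemma coeff_zero_transverseJet (a : ℕ → ℕ → ℂ) {i : ℕ} (hi : 1 ≤ i) :
    (transverseJet a i).coeff 0 = a 1 i := by
  rw [transverseJet, Polynomial.finsetSum_coeff, Finset.sum_eq_single_of_mem 1]
  · simp
  · simpa using hi
  · intro k hk hk1
    rw [Finset.mem_Icc] at hk
    rw [Polynomial.coeff_C_mul_X_pow, if_neg (by omega)]

lemma coeff_zero_tangentJet (N : ℕ) (b : ℕ → ℕ → ℂ) (i : ℕ) :
    (tangentJet N b i).coeff 0 = 0 := by
  rw [tangentJet, Polynomial.finsetSum_coeff]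
  refine Finset.sum_eq_zero fun k hk => ?_
  rw [Finset.mem_Icc] at hk
  rw [Polynomial.coeff_C_mul_X_pow, if_neg (by omega)]

lemma isNormalized_transversePart (N : ℕ) (a : ℕ → ℕ → ℂ) :
    IsNormalized (N - 1) (transversePart N a) := by
  simpa [transversePart] using
    IsNormalized.prod (S := Finset.Icc 1 (N - 1)) fun i _ =>
      isNormalized_transverseBranch (transverseJet a i)

lemma natDegree_coeff_zero_transversePart {N : ℕ} {a : ℕ → ℕ → ℂ}
    (ha : ∀ i ∈ Finset.Icc 1 (N - 1), a 1 i ≠ 0) :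
    ((transversePart N a).coeff 0).natDegree = N - 1 := by
  have hdeg : ∀ i ∈ Finset.Icc 1 (N - 1),
      ((transverseBranch (transverseJet a i)).coeff 0).natDegree = 1 := by
    intro i hi
    rw [coeff_zero_transverseBranch, coeff_zero_transverseJet a (Finset.mem_Icc.mp hi).1]
    exact Polynomial.natDegree_linear (ha i hi)
  have hne : ∀ i ∈ Finset.Icc 1 (N - 1),
      (transverseBranch (transverseJet a i)).coeff 0 ≠ 0 := by
    intro i hi h0
    simpa [h0] using hdeg i hi
  rw [transversePart, Polynomial.coeff_zero_prod, Polynomial.natDegree_prod _ _ hne,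
    Finset.sum_congr rfl hdeg]
  simp

lemma isSteep_tangentPart (M N : ℕ) (b : ℕ → ℕ → ℂ) : IsSteep (tangentPart M N b) :=
  (isSteep_tangentBranch Polynomial.coeff_X_zero).mul <|
    IsSteep.prod fun i _ => isSteep_tangentBranch (coeff_zero_tangentJet N b i)

lemma Npoly_eq_prod_aeval_jet (M N : ℕ) (a b : ℕ → ℕ → ℂ) :
    Npoly M N a b = X 0 * X 1 * (X 1 + X 0 * Polynomial.aeval (X 0) (Polynomial.X : ℂ[X])) *
      (∏ i ∈ Finset.Icc 1 (N - 1), (X 1 + X 0 * Polynomial.aeval (X 1) (transverseJet a i))) *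
      ∏ i ∈ Finset.Icc 1 (M - 2), (X 1 + X 0 * Polynomial.aeval (X 0) (tangentJet N b i)) := by
  simp only [Npoly, transverseJet, tangentJet, map_sum, map_mul, map_pow, Polynomial.aeval_X,
    Polynomial.aeval_C, algebraMap_eq, Finset.mul_sum, ← sq, pow_succ', mul_assoc,
    mul_left_comm (X 0 : MvPolynomial (Fin 2) ℂ) (C _)]

lemma blowUp_Npoly {M N : ℕ} (hM : 2 ≤ M) (hN : 1 ≤ N) (a b : ℕ → ℕ → ℂ) :
    blowUp (Npoly M N a b) =
      Y ^ (M + N) * (Polynomial.C Polynomial.X * (transversePart N a * tangentPart M N b)) := by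
  rw [Npoly_eq_prod_aeval_jet]
  simp only [map_mul, map_prod, blowUp_X_one_add_X_zero_mul_aeval_X_one,
    blowUp_X_one_add_X_zero_mul_aeval_X_zero, blowUp_X_zero, blowUp_X_one,
    Finset.prod_mul_distrib, Finset.prod_const, Nat.card_Icc, add_tsub_cancel_right]
  have hMN : M + N = 3 + (N - 1) + (M - 2) := by omega
  rw [hMN, transversePart, tangentPart]
  ring

end NormalForm

section Asymptotic

open Filter Topology
open scoped Polynomial Polynomial.Bivariate

lemma isLittleO_mul_sub_sub {α 𝕜 : Type*} [NormedField 𝕜] {l : Filter α} {w u f g : α → 𝕜}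
    {c L : 𝕜} (hu : Tendsto u l (𝓝 0)) (hw : (fun t => w t - 1 - c * u t) =o[l] u)
    (hfg : (fun t => f t - g t) =o[l] u) (hg : Tendsto g l (𝓝 L)) :
    (fun t => w t * f t - g t - c * L * u t) =o[l] u := by
  have hf : Tendsto f l (𝓝 L) := by
    simpa using (hfg.trans_tendsto hu).add hg
  have hw_mul : (fun t => (w t - 1 - c * u t) * f t) =o[l] u := by
    simpa using hw.mul_isBigO (hf.isBigO_one 𝕜)
  have hf_sub : (fun t => c * u t * (f t - L)) =o[l] u := by
    simpa using ((isBigO_refl u l).const_mul_left c).mul_isLittleO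
      ((isLittleO_one_iff 𝕜).mpr (tendsto_sub_nhds_zero_iff.mpr hf))
  refine ((hw_mul.add hf_sub).add hfg).congr_left fun t => ?_
  ring

lemma isLittleO_pow_sub_one_sub {α 𝕜 : Type*} [NormedField 𝕜] {l : Filter α} {w u : α → 𝕜}
    {c : 𝕜} (hu : Tendsto u l (𝓝 0)) (hw : (fun t => w t - 1 - c * u t) =o[l] u) (d : ℕ) :
    (fun t => w t ^ d - 1 - d * c * u t) =o[l] u := by
  induction d with
  | zero => simp
  | succ d ih =>
    have hpow : Tendsto (fun t => 1 + d * c * u t) l (𝓝 1) := by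
      simpa using (hu.const_mul (d * c)).const_add 1
    have hmul := isLittleO_mul_sub_sub hu hw (f := fun t => w t ^ d)
      (ih.congr_left fun t => by ring) hpow
    refine hmul.congr_left fun t => ?_
    push_cast
    ring

variable {𝕜 : Type*} [NontriviallyNormedField 𝕜]

lemma X_pow_succ_dvd_of_isLittleO {p : 𝕜[X]} {n : ℕ}
    (h : (fun t => p.eval t) =o[𝓝[≠] 0] fun t => t ^ n) : Polynomial.X ^ (n + 1) ∣ p := by
  by_contra hndvd
  have hp : p ≠ 0 := fun hp => hndvd (hp ▸ dvd_zero _)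
  obtain ⟨q, hpq, hq⟩ := p.exists_eq_pow_rootMultiplicity_mul_and_not_dvd hp 0
  rw [map_zero, sub_zero] at hpq hq
  set m := p.rootMultiplicity 0
  have hmn : m ≤ n := by
    by_contra! hlt
    exact hndvd (hpq ▸ (pow_dvd_pow _ hlt).mul_right q)
  have hpow : (fun t : 𝕜 => t ^ n) =O[𝓝[≠] 0] fun t => t ^ m := by
    rcases hmn.eq_or_lt with rfl | hlt
    exacts [isBigO_refl _ _, ((isLittleO_pow_pow hlt).mono nhdsWithin_le_nhds).isBigO]
  have hne : ∀ᶠ t : 𝕜 in 𝓝[≠] 0, t ^ m ≠ 0 :=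
    eventually_mem_nhdsWithin.mono fun t ht => pow_ne_zero m ht
  have hq_tendsto : Tendsto (fun t => q.eval t) (𝓝[≠] 0) (𝓝 0) := by
    rw [← isLittleO_one_iff 𝕜]
    have hmul : (fun t => t ^ m * q.eval t) =o[𝓝[≠] 0] fun t => t ^ m :=
      (h.trans_isBigO hpow).congr_left fun t => by rw [hpq]; simp
    exact ((isLittleO_mul_iff_isLittleO_div hne).mp hmul).congr' .rfl
      (hne.mono fun t => div_self)
  have hq0 : q.eval 0 = 0 :=
    tendsto_nhds_unique (q.continuous.continuousAt.mono_left nhdsWithin_le_nhds) hq_tendsto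
  exact hq (Polynomial.X_dvd_iff.mpr (q.coeff_zero_eq_eval_zero ▸ hq0))

lemma Y_pow_succ_dvd_of_forall_isLittleO {F : 𝕜[X][Y]} {n : ℕ}
    (h : ∀ s, (fun t => F.evalEval s t) =o[𝓝[≠] 0] fun t => t ^ n) : Y ^ (n + 1) ∣ F := by
  have hmap (s : 𝕜) : Polynomial.X ^ (n + 1) ∣ F.map (Polynomial.evalRingHom s) :=
    X_pow_succ_dvd_of_isLittleO <| by
      simpa only [Polynomial.map_evalRingHom_eval] using h s
  simp only [Polynomial.X_pow_dvd_iff, Polynomial.coeff_map] at hmap ⊢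
  exact fun k hk => Polynomial.funext fun s => by simpa using hmap s k hk

lemma analyticAt_evalEval (F : 𝕜[X][Y]) (z : 𝕜 × 𝕜) :
    AnalyticAt 𝕜 (fun z : 𝕜 × 𝕜 => F.evalEval z.1 z.2) z := by
  simp only [Polynomial.evalEval, Polynomial.eval_eq_sum_range (p := F), Polynomial.eval_finsetSum,
    Polynomial.eval_mul, Polynomial.eval_pow, Polynomial.eval_C]
  refine Finset.analyticAt_fun_sum _ fun k _ => .mul ?_ (analyticAt_snd.pow k)
  exact analyticAt_fst.aeval_polynomial (F.coeff k)

/-- Along the line of slope `s`, the curve `t ↦ (x t, y t)` agrees up to `o(t ^ (n + 1))` with the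
radial displacement `(1 + c * t ^ n) • (s * t, t)` of the line. -/
structure IsRadialDisplacement (n : ℕ) (s c : 𝕜) (x y : 𝕜 → 𝕜) : Prop where
  fst : (fun t => x t - s * t - s * c * t ^ (n + 1)) =o[𝓝[≠] 0] fun t => t ^ (n + 1)
  snd : (fun t => y t - t - c * t ^ (n + 1)) =o[𝓝[≠] 0] fun t => t ^ (n + 1)

lemma isLittleO_div_self_of_isLittleO_pow_succ {f : 𝕜 → 𝕜} {n : ℕ}
    (h : f =o[𝓝[≠] 0] fun t => t ^ (n + 1)) :
    (fun t => f t / t) =o[𝓝[≠] 0] fun t => t ^ n := by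
  have hne : ∀ᶠ t : 𝕜 in 𝓝[≠] 0, t ≠ 0 := eventually_mem_nhdsWithin
  have hmul : (fun t => t * (f t / t)) =o[𝓝[≠] 0] fun t => t ^ (n + 1) :=
    h.congr' (hne.mono fun t ht => (mul_div_cancel₀ (f t) ht).symm) .rfl
  exact ((isLittleO_mul_iff_isLittleO_div hne).mp hmul).congr' .rfl
    (hne.mono fun t ht => by simp only [pow_succ, mul_div_cancel_right₀ _ ht])

lemma tendsto_pow_nhdsNE_zero {n : ℕ} (hn : n ≠ 0) :
    Tendsto (fun t : 𝕜 => t ^ n) (𝓝[≠] 0) (𝓝 0) := by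
  simpa [hn] using ((continuous_pow n).tendsto (0 : 𝕜)).mono_left nhdsWithin_le_nhds

namespace IsRadialDisplacement

variable {n : ℕ} {s c : 𝕜} {x y : 𝕜 → 𝕜}

lemma snd_div_isLittleO (h : IsRadialDisplacement n s c x y) :
    (fun t => y t / t - 1 - c * t ^ n) =o[𝓝[≠] 0] fun t => t ^ n := by
  refine (isLittleO_div_self_of_isLittleO_pow_succ h.snd).congr' ?_ .rfl
  filter_upwards [eventually_mem_nhdsWithin] with t ht
  have ht0 : t ≠ 0 := ht
  field_simp
  ring

lemma tendsto_snd_div (h : IsRadialDisplacement n s c x y) (hn : n ≠ 0) :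
    Tendsto (fun t => y t / t) (𝓝[≠] 0) (𝓝 1) := by
  have hpow := tendsto_pow_nhdsNE_zero (𝕜 := 𝕜) hn
  simpa using ((h.snd_div_isLittleO.trans_tendsto hpow).add (hpow.const_mul c)).add_const 1

lemma eventually_snd_ne_zero (h : IsRadialDisplacement n s c x y) (hn : n ≠ 0) :
    ∀ᶠ t in 𝓝[≠] 0, y t ≠ 0 :=
  ((h.tendsto_snd_div hn).eventually_ne one_ne_zero).mono fun t ht hy => ht (by simp [hy])

lemma fst_div_snd_isLittleO (h : IsRadialDisplacement n s c x y) (hn : n ≠ 0) :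
    (fun t => x t / y t - s) =o[𝓝[≠] 0] fun t => t ^ n := by
  have hsub : (fun t => x t - s * y t) =o[𝓝[≠] 0] fun t => t ^ (n + 1) :=
    (h.fst.sub (h.snd.const_mul_left s)).congr_left fun t => by ring
  have hinv : (fun t => (y t / t)⁻¹) =O[𝓝[≠] 0] fun _ => (1 : 𝕜) :=
    ((h.tendsto_snd_div hn).inv₀ one_ne_zero).isBigO_one 𝕜
  refine ((isLittleO_div_self_of_isLittleO_pow_succ hsub).mul_isBigO hinv).congr' ?_
    (.of_forall fun t => mul_one _)
  filter_upwards [eventually_mem_nhdsWithin, h.eventually_snd_ne_zero hn] with t ht hy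
  have ht0 : t ≠ 0 := ht
  field_simp

lemma snd_sub_isLittleO (h : IsRadialDisplacement n s c x y) :
    (fun t => y t - t) =o[𝓝[≠] 0] fun t => t ^ n := by
  have hpow : (fun t : 𝕜 => t ^ (n + 1)) =o[𝓝[≠] 0] fun t => t ^ n :=
    (isLittleO_pow_pow n.lt_succ_self).mono nhdsWithin_le_nhds
  exact ((h.snd.trans hpow).add (hpow.const_mul_left c)).congr_left fun t => by ring

lemma evalEval_sub_isLittleO (h : IsRadialDisplacement n s c x y) (hn : n ≠ 0) (F : 𝕜[X][Y]) :
    (fun t => F.evalEval (x t / y t) (y t) - F.evalEval s t) =o[𝓝[≠] 0] fun t => t ^ n := by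
  have hid : Tendsto (fun t : 𝕜 => t) (𝓝[≠] 0) (𝓝 0) := nhdsWithin_le_nhds
  have hpow := tendsto_pow_nhdsNE_zero (𝕜 := 𝕜) hn
  have hfst : Tendsto (fun t => x t / y t) (𝓝[≠] 0) (𝓝 s) :=
    tendsto_sub_nhds_zero_iff.mp ((h.fst_div_snd_isLittleO hn).trans_tendsto hpow)
  have hsnd : Tendsto y (𝓝[≠] 0) (𝓝 0) := by
    simpa using (h.snd_sub_isLittleO.trans_tendsto hpow).add hid
  have hpair : Tendsto (fun t => ((x t / y t, y t), (s, t))) (𝓝[≠] 0) (𝓝 ((s, 0), (s, 0))) :=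
    (hfst.prodMk_nhds hsnd).prodMk_nhds (tendsto_const_nhds.prodMk_nhds hid)
  exact ((analyticAt_evalEval F (s, 0)).hasStrictFDerivAt.isBigO_sub.comp_tendsto
    hpair).trans_isLittleO ((h.fst_div_snd_isLittleO hn).prod_left h.snd_sub_isLittleO)

theorem evalEval_sub_sub_isLittleO (h : IsRadialDisplacement n s c x y) (hn : n ≠ 0)
    {f g : MvPolynomial (Fin 2) 𝕜} {F G : 𝕜[X][Y]} {d : ℕ} (hF : blowUp f = Y ^ d * F)
    (hG : blowUp g = Y ^ d * G)
    (hfg : ∀ᶠ t in 𝓝[≠] 0, eval ![x t, y t] f = eval ![s * t, t] g) :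
    (fun t => G.evalEval s t - F.evalEval s t - d * c * F.evalEval s 0 * t ^ n)
      =o[𝓝[≠] 0] fun t => t ^ n := by
  have hpow := tendsto_pow_nhdsNE_zero (𝕜 := 𝕜) hn
  have hF_tendsto : Tendsto (fun t => F.evalEval s t) (𝓝[≠] 0) (𝓝 (F.evalEval s 0)) :=
    ((analyticAt_evalEval F (s, 0)).continuousAt.tendsto.comp
      (Continuous.prodMk_right s).continuousAt).mono_left nhdsWithin_le_nhds
  refine (isLittleO_mul_sub_sub hpow (isLittleO_pow_sub_one_sub hpow h.snd_div_isLittleO d)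
    (h.evalEval_sub_isLittleO hn F) hF_tendsto).congr' ?_ .rfl
  filter_upwards [eventually_mem_nhdsWithin, h.eventually_snd_ne_zero hn, hfg] with t ht hy hfg
  have hlift : y t ^ d * F.evalEval (x t / y t) (y t) = t ^ d * G.evalEval s t := by
    have hFy := evalEval_blowUp f (x t / y t) (y t)
    rw [div_mul_cancel₀ _ hy, hfg, ← evalEval_blowUp, hF, hG] at hFy
    simpa [Polynomial.evalEval_mul, Polynomial.evalEval_pow] using hFy
  rw [div_pow, div_mul_eq_mul_div, hlift, mul_div_cancel_left₀ _ (pow_ne_zero d ht)]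

end IsRadialDisplacement

end Asymptotic

section RadialJet

open Filter Topology
open scoped Polynomial Polynomial.Bivariate

lemma exists_eq_homogenize_of_X_zero_mul_eq_X_one_mul {R : Type*} [CommSemiring R]
    {P Q : MvPolynomial (Fin 2) R} {n : ℕ} (hP : P.IsHomogeneous (n + 1))
    (hQ : Q.IsHomogeneous (n + 1)) (hPQ : X 0 * Q = X 1 * P) :
    ∃ r : R[X], r.natDegree ≤ n ∧ P = (Polynomial.X * r).homogenize (n + 1) ∧
      Q = r.homogenize (n + 1) := by
  have haevalP :
      Polynomial.X * aeval ![(Polynomial.X : R[X]), 1] Q = aeval ![Polynomial.X, 1] P := by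
    simpa using congr_arg (aeval ![(Polynomial.X : R[X]), 1]) hPQ
  refine ⟨aeval ![Polynomial.X, 1] Q, ?_, ?_, ?_⟩
  · have hdeg : (aeval ![(Polynomial.X : R[X]), 1] P).natDegree ≤ n + 1 := by
      refine (aeval_natDegree_le P hP.totalDegree_le _ (n := 1) ?_).trans_eq (mul_one _)
      intro i
      fin_cases i <;> simp [Polynomial.natDegree_X_le]
    rw [Polynomial.natDegree_le_iff_coeff_eq_zero]
    intro k hk
    rw [← Polynomial.coeff_X_mul, haevalP]
    exact Polynomial.coeff_eq_zero_of_natDegree_lt (hdeg.trans_lt (Nat.succ_lt_succ hk))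
  · rw [haevalP, Polynomial.homogenize_eq_of_isHomogeneous hP rfl]
  · rw [Polynomial.homogenize_eq_of_isHomogeneous hQ rfl]

variable {𝕜 : Type*} [NontriviallyNormedField 𝕜]

lemma tendsto_line_nhdsNE_zero (s : 𝕜) : Tendsto (fun t => (s * t, t)) (𝓝[≠] 0) (𝓝 0) :=
  (Continuous.tendsto' (by fun_prop) _ _ (by simp)).mono_left nhdsWithin_le_nhds

variable {r : 𝕜[X]} {n : ℕ} {φ : 𝕜 × 𝕜 → 𝕜 × 𝕜}

/-- The Taylor expansion of `φ` at the origin is `z + ρ(z) • z + o(‖z‖ ^ (n + 1))`, where the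
homogeneous polynomial `ρ(x, y) = y ^ n * r(x / y)` has degree `n`. This is the shape of a
dicritical germ tangent to the identity. -/
structure HasRadialJet (φ : 𝕜 × 𝕜 → 𝕜 × 𝕜) (n : ℕ) (r : 𝕜[X]) : Prop where
  natDegree_le : r.natDegree ≤ n
  isLittleO : (fun z => φ z - z - (eval ![z.1, z.2] ((Polynomial.X * r).homogenize (n + 1)),
    eval ![z.1, z.2] (r.homogenize (n + 1)))) =o[𝓝 0] fun z => ‖z‖ ^ (n + 1)

namespace HasRadialJet

lemma isRadialDisplacement (h : HasRadialJet φ n r) (s : 𝕜) :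
    IsRadialDisplacement n s (r.eval s) (fun t => (φ (s * t, t)).1)
      (fun t => (φ (s * t, t)).2) := by
  have hnorm : (fun t : 𝕜 => ‖(s * t, t)‖ ^ (n + 1)) =O[𝓝[≠] 0] fun t => t ^ (n + 1) :=
    (((isBigO_refl _ _).const_mul_left s).prod_left (isBigO_refl _ _)).norm_left.pow (n + 1)
  have hφ_line := (h.isLittleO.comp_tendsto (tendsto_line_nhdsNE_zero s)).trans_isBigO hnorm
  have hXr : (Polynomial.X * r).natDegree ≤ n + 1 :=
    (Polynomial.natDegree_mul_le_of_le Polynomial.natDegree_X_le h.natDegree_le).trans_eq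
      (add_comm 1 n)
  constructor
  · refine ((isBigO_fst_prod (l := 𝓝[≠] (0 : 𝕜))).trans_isLittleO hφ_line).congr' ?_ .rfl
    filter_upwards [eventually_mem_nhdsWithin] with t ht
    have ht0 : t ≠ 0 := ht
    simp [Polynomial.eval_homogenize hXr ![s * t, t] ht0, ht0]
  · refine ((isBigO_snd_prod (l := 𝓝[≠] (0 : 𝕜))).trans_isLittleO hφ_line).congr' ?_ .rfl
    filter_upwards [eventually_mem_nhdsWithin] with t ht
    have ht0 : t ≠ 0 := ht
    simp [Polynomial.eval_homogenize (h.natDegree_le.trans n.le_succ) ![s * t, t] ht0, ht0]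

theorem Y_pow_succ_dvd_sub_sub (h : HasRadialJet φ n r) (hn : n ≠ 0)
    {f g : MvPolynomial (Fin 2) 𝕜} {F G : 𝕜[X][Y]} {d : ℕ} (hF : blowUp f = Y ^ d * F)
    (hG : blowUp g = Y ^ d * G)
    (hfg : ∀ᶠ z in 𝓝 0, eval ![(φ z).1, (φ z).2] f = eval ![z.1, z.2] g) :
    Y ^ (n + 1) ∣ G - F - Polynomial.C (F.coeff 0 * (d * r)) * Y ^ n := by
  refine Y_pow_succ_dvd_of_forall_isLittleO fun s => ?_
  refine ((h.isRadialDisplacement s).evalEval_sub_sub_isLittleO hn hF hG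
    ((tendsto_line_nhdsNE_zero s).eventually hfg)).congr_left fun t => ?_
  have hF0 : F.evalEval s 0 = (F.coeff 0).eval s := by
    rw [Polynomial.evalEval, Polynomial.coeff_zero_eq_eval_zero, map_zero]
  simp only [Polynomial.evalEval_sub, Polynomial.evalEval_mul, Polynomial.evalEval_pow,
    Polynomial.evalEval_C, Polynomial.evalEval_X, Polynomial.eval_mul, Polynomial.eval_natCast, hF0]
  ring

end HasRadialJet

lemma eq_of_eventually_eval_eq {σ : Type*} [Finite σ] {f g : MvPolynomial σ 𝕜} {x : σ → 𝕜}
    (h : ∀ᶠ y in 𝓝 x, eval y f = eval y g) : f = g := by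
  have := Fintype.ofFinite σ
  obtain ⟨ε, hε, hball⟩ := Metric.eventually_nhds_iff_ball.mp h
  rw [ball_pi _ hε] at hball
  exact funext_set _ (fun i => infinite_of_mem_nhds (x i) (Metric.ball_mem_nhds _ hε)) hball

end RadialJet

section Dicritical

open Filter Topology
open scoped Polynomial Polynomial.Bivariate

lemma X_pow_dvd_of_X_pow_dvd_C_mul {R : Type*} [Semiring R] [NoZeroDivisors R] {c : R} (hc : c ≠ 0)
    {p : R[X]} {n : ℕ} (h : Polynomial.X ^ n ∣ Polynomial.C c * p) : Polynomial.X ^ n ∣ p := by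
  simp only [Polynomial.X_pow_dvd_iff, Polynomial.coeff_C_mul, mul_eq_zero, hc, false_or] at h ⊢
  exact h

variable {M N : ℕ} {a b a' b' : ℕ → ℕ → ℂ} {φ : ℂ × ℂ → ℂ × ℂ}

lemma Npoly_eq_of_eventually_Nfun_eq
    (h : ∀ᶠ z in 𝓝 0, Nfun M N a b z = Nfun M N a' b' z) :
    Npoly M N a b = Npoly M N a' b' := by
  have hpair : Tendsto (fun x : Fin 2 → ℂ => (x 0, x 1)) (𝓝 0) (𝓝 0) :=
    Continuous.tendsto' (by fun_prop) _ _ rfl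
  refine eq_of_eventually_eval_eq ((hpair.eventually h).mono fun x hx => ?_)
  rwa [Nfun, Nfun, show ![x 0, x 1] = x by ext i; fin_cases i <;> rfl] at hx

theorem HasRadialJet.eq_zero_of_eventually_Nfun_eq (hM : 2 ≤ M) (hN : 1 ≤ N)
    (ha : ∀ i ∈ Finset.Icc 1 (N - 1), a 1 i ≠ 0) {r : ℂ[X]} {ν : ℕ} (hν : ν ≠ 0)
    (hφ : HasRadialJet φ ν r)
    (hconj : ∀ᶠ z in 𝓝 0, Nfun M N a b (φ z) = Nfun M N a' b' z) : r = 0 := by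
  have hdvd := hφ.Y_pow_succ_dvd_sub_sub hν (blowUp_Npoly hM hN a b)
    (blowUp_Npoly hM hN a' b') hconj
  have hcast : ((M + N : ℕ) : ℂ[X]) ≠ 0 := by
    rw [Nat.cast_ne_zero]
    omega
  have hcancel : Y ^ (ν + 1) ∣ transversePart N a' * tangentPart M N b' -
      transversePart N a * tangentPart M N b -
      Polynomial.C ((transversePart N a).coeff 0 * ((M + N : ℕ) * r)) * Y ^ ν := by
    refine X_pow_dvd_of_X_pow_dvd_C_mul Polynomial.X_ne_zero (hdvd.trans (dvd_of_eq ?_))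
    simp only [Polynomial.mul_coeff_zero, Polynomial.coeff_C_zero,
      (isSteep_tangentPart M N b).coeff_zero, mul_one, map_mul]
    ring
  have hdr := eq_zero_of_Y_pow_succ_dvd_mul_sub_mul (isNormalized_transversePart N a)
    (natDegree_coeff_zero_transversePart ha) (isNormalized_transversePart N a')
    (isSteep_tangentPart M N b) (isSteep_tangentPart M N b')
    ((Polynomial.natDegree_C_mul_le ((M + N : ℕ) : ℂ) r).trans hφ.natDegree_le) hcancel
  exact (mul_eq_zero.mp hdr).resolve_left hcast

theorem stmt_2_general (M N : ℕ) (hM : 2 ≤ M) (hN : 1 ≤ N) (a b a' b' : ℕ → ℕ → ℂ)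
    (ha : ∀ i ∈ Finset.Icc 1 (N - 1), a 1 i ≠ 0) (φ : ℂ × ℂ → ℂ × ℂ)
    (hconj : ∀ᶠ z in 𝓝 0, Nfun M N a b (φ z) = Nfun M N a' b' z)
    (hdic : (∀ᶠ z in nhds (0 : ℂ × ℂ), φ z = z) ∨
      ∃ ν : ℕ, 1 ≤ ν ∧ ∃ P Q : MvPolynomial (Fin 2) ℂ,
        P.IsHomogeneous (ν + 1) ∧ Q.IsHomogeneous (ν + 1) ∧ ¬(P = 0 ∧ Q = 0) ∧
        (fun z : ℂ × ℂ => φ z - z - (eval ![z.1, z.2] P, eval ![z.1, z.2] Q))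
          =o[nhds (0 : ℂ × ℂ)] (fun z : ℂ × ℂ => ‖z‖ ^ (ν + 1)) ∧
        X 0 * Q - X 1 * P = 0) :
    (∀ᶠ z in 𝓝 0, φ z = z) ∧ Npoly M N a b = Npoly M N a' b' := by
  have hid : ∀ᶠ z in 𝓝 0, φ z = z := by
    refine hdic.resolve_right ?_
    rintro ⟨ν, hν, P, Q, hP, hQ, hPQ0, hφ, hradial⟩
    obtain ⟨r, hr, rfl, rfl⟩ :=
      exists_eq_homogenize_of_X_zero_mul_eq_X_one_mul hP hQ (sub_eq_zero.mp hradial)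
    obtain rfl := HasRadialJet.eq_zero_of_eventually_Nfun_eq hM hN ha
      (Nat.one_le_iff_ne_zero.mp hν) ⟨hr, hφ⟩ hconj
    exact hPQ0 (by simp)
  refine ⟨hid, Npoly_eq_of_eventually_Nfun_eq ?_⟩
  filter_upwards [hid, hconj] with z hz hconj
  rwa [hz] at hconj

end Dicritical

/-- If `φ` is a dicritical germ of biholomorphism tangent to the identity with
`N_p ∘ φ = N_q`, then `N_p = N_q`. Dicritical means: either `φ = id` near `0`, or the
first nonvanishing homogeneous term `(P,Q)` (of degree `ν+1 ≥ 2`) of the Taylor expansion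
of `φ - id` at `0` satisfies `x·Q - y·P = 0`. -/
theorem stmt_2 (M N : ℕ) (hM : 2 ≤ M) (hN : 2 ≤ N) (a b a' b' : ℕ → ℕ → ℂ)
    (hp : memP M N a b) (hq : memP M N a' b')
    (U : Set (ℂ × ℂ)) (hU : IsOpen U) (h0U : (0 : ℂ × ℂ) ∈ U)
    (φ : ℂ × ℂ → ℂ × ℂ) (hφan : ∀ z ∈ U, AnalyticAt ℂ φ z) (hφ0 : φ 0 = 0)
    (hdφ : HasFDerivAt φ (ContinuousLinearMap.id ℂ (ℂ × ℂ)) 0)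
    (hconj : ∀ z ∈ U, Nfun M N a b (φ z) = Nfun M N a' b' z)
    (hdic : (∀ᶠ z in nhds (0 : ℂ × ℂ), φ z = z) ∨
      ∃ ν : ℕ, 1 ≤ ν ∧ ∃ P Q : MvPolynomial (Fin 2) ℂ,
        P.IsHomogeneous (ν + 1) ∧ Q.IsHomogeneous (ν + 1) ∧ ¬(P = 0 ∧ Q = 0) ∧
        (fun z : ℂ × ℂ => φ z - z - (eval ![z.1, z.2] P, eval ![z.1, z.2] Q))
          =o[nhds (0 : ℂ × ℂ)] (fun z : ℂ × ℂ => ‖z‖ ^ (ν + 1)) ∧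
        X 0 * Q - X 1 * P = 0) :
    Npoly M N a b = Npoly M N a' b' := by
  exact (stmt_2_general M N hM (one_le_two.trans hN) a b a' b' hp.1 φ
    ((hU.eventually_mem h0U).mono hconj) hdic).2
end

section
/- Let p and q be parameters, let ν ≥ 1 be an integer, and let φ : U → ℂ² be a complex-analytic map on an open neighborhood U of 0 in ℂ² with φ(0) = 0 such that φ − id vanishes to order at least ν+1 at 0 (all Taylor terms of φ − id of total degree ≤ ν vanish). If N_p(φ(z)) = N_q(z) for all z ∈ U, then every coefficient of N_p − N_q on a monomial of total degree strictly less than M+N+ν vanishes; equivalently, the homogeneous components satisfy N_p^{(M+N+l)} = N_q^{(M+N+l)} for all 0 ≤ l ≤ ν−1. -/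
open MvPolynomial

/-!
Let `I` be the ideal generated by the variables, so that `P ∈ I ^ m` says that `P` has order at
least `m` at the origin. If `x` and `y` have size `O(r)` and differ by `O(r * s)`, then writing an
element of `I ^ (m + 1) = I * I ^ m` as a sum of products and telescoping
`p(y) q(y) - p(x) q(x) = (p(y) - p(x)) q(y) + p(x) (q(y) - q(x))` shows that the values of `P` at
`x` and `y` differ by `O(r ^ m * s)`. With `r = ‖z‖` and `s = ‖z‖ ^ ν`, composing `P` with a map
tangent to the identity to order `ν` changes it by `O(‖z‖ ^ (m + ν))`. On the other hand a
polynomial function of size `O(‖z‖ ^ n)` lies in `I ^ n`: along a line through the origin its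
lowest homogeneous component would otherwise dominate. The normal form lies in `I ^ (M + N)`,
because each of its `M + N` factors vanishes at the origin.
-/

open Asymptotics
open scoped Topology

section Growth

variable {α σ R : Type*} [SeminormedCommRing R] {l : Filter α} {r s : α → ℝ} {x y : α → σ → R}

theorem isBigO_eval_of_mem_pow_idealOfVars {m : ℕ} {P : MvPolynomial σ R}
    (hP : P ∈ idealOfVars σ R ^ m) (hr : r =O[l] fun _ => (1 : ℝ))
    (hx : ∀ i, (fun a => x a i) =O[l] r) :
    (fun a => eval (x a) P) =O[l] fun a => r a ^ m := by
  simp only [eval_eq]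
  refine IsBigO.fun_sum fun d hd => ?_
  have hmonomial : (fun a => ∏ i ∈ d.support, x a i ^ d i) =O[l] fun a => r a ^ d.degree := by
    simp only [Finsupp.degree_apply, ← Finset.prod_pow_eq_pow_sum]
    exact IsBigO.finsetProd fun i _ => (hx i).pow (d i)
  have hdegree : (fun a => r a ^ d.degree) =O[l] fun a => r a ^ m := by
    obtain ⟨k, hk⟩ := Nat.exists_eq_add_of_le ((mem_pow_idealOfVars_iff m P).1 hP d hd)
    simpa [hk, pow_add] using (isBigO_refl (fun a => r a ^ m) l).mul (hr.pow k)
  exact (hmonomial.trans hdegree).const_mul_left _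

theorem isBigO_eval_one (P : MvPolynomial σ R) (hx : ∀ i, (fun a => x a i) =O[l] fun _ => (1 : ℝ)) :
    (fun a => eval (x a) P) =O[l] fun _ => (1 : ℝ) := by
  simpa using isBigO_eval_of_mem_pow_idealOfVars (m := 0) (P := P) (by simp) (isBigO_refl _ l) hx

theorem isBigO_eval_sub_eval (P : MvPolynomial σ R)
    (hx : ∀ i, (fun a => x a i) =O[l] fun _ => (1 : ℝ))
    (hy : ∀ i, (fun a => y a i) =O[l] fun _ => (1 : ℝ))
    (hxy : ∀ i, (fun a => y a i - x a i) =O[l] s) :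
    (fun a => eval (y a) P - eval (x a) P) =O[l] s := by
  induction P using MvPolynomial.induction_on with
  | C c => simpa using isBigO_zero s l
  | add p q hp hq =>
    refine (hp.add hq).congr_left fun a => ?_
    simp only [map_add]
    ring
  | mul_X p i hp =>
    have hleft : (fun a => (eval (y a) p - eval (x a) p) * y a i) =O[l] s := by
      simpa using hp.mul (hy i)
    have hright : (fun a => eval (x a) p * (y a i - x a i)) =O[l] s := by
      simpa using (isBigO_eval_one p hx).mul (hxy i)
    refine (hleft.add hright).congr_left fun a => ?_
    simp only [map_mul, eval_X]
    ring

theorem isBigO_eval_sub_eval_of_mem_pow_idealOfVars {m : ℕ} {P : MvPolynomial σ R}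
    (hP : P ∈ idealOfVars σ R ^ m) (hr : r =O[l] fun _ => (1 : ℝ)) (hs : s =O[l] fun _ => (1 : ℝ))
    (hx : ∀ i, (fun a => x a i) =O[l] r)
    (hxy : ∀ i, (fun a => y a i - x a i) =O[l] fun a => r a * s a) :
    (fun a => eval (y a) P - eval (x a) P) =O[l] fun a => r a ^ m * s a := by
  have hrs : (fun a => r a * s a) =O[l] r := by
    simpa using (isBigO_refl r l).mul hs
  have hy (i : σ) : (fun a => y a i) =O[l] r := by
    simpa using ((hxy i).trans hrs).add (hx i)
  have hdiff (p : MvPolynomial σ R) : (fun a => eval (y a) p - eval (x a) p) =O[l]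
      fun a => r a * s a :=
    isBigO_eval_sub_eval p (fun i => (hx i).trans hr) (fun i => (hy i).trans hr) hxy
  induction m generalizing P with
  | zero => simpa using (hdiff P).trans (hr.mul (isBigO_refl s l))
  | succ m ih =>
    rw [pow_succ'] at hP
    induction hP using Submodule.mul_induction_on' with
    | mem_mul_mem p hp q hq =>
      have hleft : (fun a => (eval (y a) p - eval (x a) p) * eval (y a) q) =O[l]
          fun a => r a ^ (m + 1) * s a :=
        ((hdiff p).mul (isBigO_eval_of_mem_pow_idealOfVars hq hr hy)).congr_right fun a => by ring
      have hright : (fun a => eval (x a) p * (eval (y a) q - eval (x a) q)) =O[l]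
          fun a => r a ^ (m + 1) * s a :=
        ((isBigO_eval_of_mem_pow_idealOfVars (m := 1) (by rwa [pow_one]) hr hx).mul
          (ih hq)).congr_right fun a => by ring
      refine (hleft.add hright).congr_left fun a => ?_
      simp only [map_mul]
      ring
    | add p _ q _ hp hq =>
      refine (hp.add hq).congr_left fun a => ?_
      simp only [map_add]
      ring

end Growth

theorem eval_smul_of_isHomogeneous {σ R : Type*} [CommSemiring R] {P : MvPolynomial σ R} {n : ℕ}
    (hP : P.IsHomogeneous n) (t : R) (v : σ → R) : eval (t • v) P = t ^ n * eval v P := by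
  rw [eval_eq, eval_eq, Finset.mul_sum]
  refine Finset.sum_congr rfl fun d hd => ?_
  have hdegree : d.degree = n := by
    rw [Finsupp.degree_eq_weight_one]
    exact hP (mem_support_iff.1 hd)
  simp only [Pi.smul_apply, smul_eq_mul, mul_pow, Finset.prod_mul_distrib,
    Finset.prod_pow_eq_pow_sum, ← Finsupp.degree_apply, hdegree]
  ring

theorem homogeneousComponent_eq_zero_of_mem_pow_idealOfVars {σ R : Type*} [CommSemiring R]
    {P : MvPolynomial σ R} {n d : ℕ} (hP : P ∈ idealOfVars σ R ^ n) (hd : d < n) :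
    homogeneousComponent d P = 0 :=
  homogeneousComponent_eq_zero' _ _ fun e he => (hd.trans_le <| by
    simpa using (mem_pow_idealOfVars_iff n P).1 hP e he).ne'

theorem sub_homogeneousComponent_mem_pow_idealOfVars {σ R : Type*} [CommRing R]
    {P : MvPolynomial σ R} {n : ℕ} (hP : P ∈ idealOfVars σ R ^ n) :
    P - homogeneousComponent n P ∈ idealOfVars σ R ^ (n + 1) := by
  rw [mem_pow_idealOfVars_iff'] at hP ⊢
  intro d hd
  rw [coeff_sub, coeff_homogeneousComponent]
  split_ifs with h
  · exact sub_self _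
  · rw [hP d (by omega), sub_zero]

section Vanishing

variable {𝕜 E σ : Type*} [NontriviallyNormedField 𝕜] [NormedAddCommGroup E] [NormedSpace 𝕜 E]

theorem isBigO_coord_norm (ℓ : E →L[𝕜] σ → 𝕜) (i : σ) (l : Filter E) :
    (fun z => ℓ z i) =O[l] fun z => ‖z‖ :=
  (((ContinuousLinearMap.proj i).comp ℓ).isBigO_id l).norm_right

theorem isBigO_norm_pow_one (n : ℕ) : (fun z : E => ‖z‖ ^ n) =O[𝓝 0] fun _ => (1 : ℝ) :=
  (continuous_norm.pow n).continuousAt.isBigO_one ℝ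

theorem eq_zero_of_isHomogeneous_of_isBigO_norm_pow_succ {ℓ : E →L[𝕜] σ → 𝕜}
    (hℓ : Function.Surjective ℓ) {P : MvPolynomial σ 𝕜} {n : ℕ} (hP : P.IsHomogeneous n)
    (h : (fun z => eval (ℓ z) P) =O[𝓝 0] fun z => ‖z‖ ^ (n + 1)) : P = 0 := by
  have : Infinite 𝕜 := NontriviallyNormedField.infinite 𝕜
  refine hP.eq_zero_of_forall_eval_eq_zero fun v => ?_
  obtain ⟨w, rfl⟩ := hℓ v
  by_contra hw
  let L : 𝕜 →L[𝕜] E := ContinuousLinearMap.toSpanSingleton 𝕜 w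
  have hline : Filter.Tendsto L (𝓝 0) (𝓝 0) := L.continuous.tendsto' 0 0 (map_zero L)
  have hvalue (t : 𝕜) : eval (ℓ (L t)) P = eval (ℓ w) P * t ^ n := by
    rw [ContinuousLinearMap.toSpanSingleton_apply, map_smul, eval_smul_of_isHomogeneous hP,
      mul_comm]
  have hpow : (fun t : 𝕜 => t ^ n) =O[𝓝 0] fun t => t ^ (n + 1) :=
    calc (fun t : 𝕜 => t ^ n)
      _ =O[𝓝 0] fun t => eval (ℓ w) P * t ^ n := isBigO_self_const_mul hw _ _
      _ =O[𝓝 0] fun t => ‖L t‖ ^ (n + 1) := (h.comp_tendsto hline).congr_left hvalue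
      _ =O[𝓝 0] fun t => t ^ (n + 1) := (L.isBigO_id _).norm_left.pow _
  have hnonzero : ∃ᶠ t : 𝕜 in 𝓝 0, t ^ n ≠ 0 :=
    ((eventually_mem_nhdsWithin (s := {(0 : 𝕜)}ᶜ)).frequently.filter_mono nhdsWithin_le_nhds).mono
      fun t ht => pow_ne_zero n ht
  exact isLittleO_irrefl hnonzero (hpow.trans_isLittleO (isLittleO_pow_pow n.lt_succ_self))

theorem mem_pow_idealOfVars_of_isBigO_norm_pow {ℓ : E →L[𝕜] σ → 𝕜} (hℓ : Function.Surjective ℓ)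
    {P : MvPolynomial σ 𝕜} {n : ℕ} (h : (fun z => eval (ℓ z) P) =O[𝓝 0] fun z => ‖z‖ ^ n) :
    P ∈ idealOfVars σ 𝕜 ^ n := by
  induction n with
  | zero => simp
  | succ n ih =>
    have hpow : (fun z : E => ‖z‖ ^ (n + 1)) =O[𝓝 0] fun z => ‖z‖ ^ n := by
      simpa only [pow_succ, pow_zero, one_mul, mul_one] using
        (isBigO_refl (fun z : E => ‖z‖ ^ n) (𝓝 0)).mul (isBigO_norm_pow_one 1)
    have hrest := sub_homogeneousComponent_mem_pow_idealOfVars (ih (h.trans hpow))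
    have hlowest : (fun z => eval (ℓ z) (homogeneousComponent n P)) =O[𝓝 0]
        fun z => ‖z‖ ^ (n + 1) := by
      simpa using h.sub (isBigO_eval_of_mem_pow_idealOfVars hrest
        (by simpa only [pow_one] using isBigO_norm_pow_one 1) fun i => isBigO_coord_norm ℓ i _)
    rwa [eq_zero_of_isHomogeneous_of_isBigO_norm_pow_succ hℓ
      (homogeneousComponent_isHomogeneous n P) hlowest, sub_zero] at hrest

theorem isBigO_norm_pow_of_iteratedFDeriv_eq_zero [CharZero 𝕜] {F : Type*} [NormedAddCommGroup F]
    [NormedSpace 𝕜 F] [CompleteSpace F] {f : E → F} {x : E} {n : ℕ} (hf : AnalyticAt 𝕜 f x)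
    (hzero : ∀ k < n, iteratedFDeriv 𝕜 k f x = 0) :
    (fun z => f (x + z)) =O[𝓝 0] fun z => ‖z‖ ^ n := by
  obtain ⟨p, r, hp⟩ := hf
  have hpartialSum (z : E) : p.partialSum n z = 0 := by
    refine Finset.sum_eq_zero fun k hk => ?_
    have hfactorial : k.factorial • p k (fun _ => z) = 0 := by
      rw [hp.factorial_smul, hzero k (Finset.mem_range.1 hk), zero_apply]
    rw [← Nat.cast_smul_eq_nsmul 𝕜] at hfactorial
    exact (smul_eq_zero.1 hfactorial).resolve_left (Nat.cast_ne_zero.2 k.factorial_ne_zero)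
  simpa [hpartialSum] using hp.hasFPowerSeriesAt.isBigO_sub_partialSum_pow n

/-- The coordinates are read off through a surjection `ℓ`, so that `E` may be any model of affine
space, such as `ℂ × ℂ` with its coordinates indexed by `Fin 2`. -/
theorem stmt_4_general {ℓ : E →L[𝕜] σ → 𝕜} (hℓ : Function.Surjective ℓ)
    {P Q : MvPolynomial σ 𝕜} {m ν : ℕ} (hP : P ∈ idealOfVars σ 𝕜 ^ m) {φ : E → E}
    (hφ : (fun z => φ z - z) =O[𝓝 0] fun z => ‖z‖ ^ (ν + 1))
    (hconj : ∀ᶠ z in 𝓝 0, eval (ℓ (φ z)) P = eval (ℓ z) Q) {d : ℕ} (hd : d < m + ν) :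
    homogeneousComponent d P = homogeneousComponent d Q := by
  have hcoord (i : σ) : (fun z => ℓ (φ z) i - ℓ z i) =O[𝓝 0] fun z => ‖z‖ * ‖z‖ ^ ν := by
    have h := ((ContinuousLinearMap.proj i).comp ℓ).isBigO_comp (fun z => φ z - z) (𝓝 0)
    simpa [pow_succ'] using h.trans hφ
  have hcomp : (fun z => eval (ℓ (φ z)) P - eval (ℓ z) P) =O[𝓝 0] fun z => ‖z‖ ^ (m + ν) := by
    simpa only [pow_add] using isBigO_eval_sub_eval_of_mem_pow_idealOfVars hP
      (by simpa only [pow_one] using isBigO_norm_pow_one 1) (isBigO_norm_pow_one ν)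
      (fun i => isBigO_coord_norm ℓ i _) hcoord
  have hdiff : (fun z => eval (ℓ z) (Q - P)) =O[𝓝 0] fun z => ‖z‖ ^ (m + ν) :=
    hcomp.congr' (hconj.mono fun z hz => by simp only [hz, map_sub]) .rfl
  have hmem := mem_pow_idealOfVars_of_isBigO_norm_pow hℓ hdiff
  have h := homogeneousComponent_eq_zero_of_mem_pow_idealOfVars hmem hd
  rw [map_sub, sub_eq_zero] at h
  exact h.symm

end Vanishing

theorem Npoly_mem_pow_idealOfVars (M N : ℕ) (a b : ℕ → ℕ → ℂ) :
    Npoly M N a b ∈ idealOfVars (Fin 2) ℂ ^ (M + N) := by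
  set I := idealOfVars (Fin 2) ℂ
  have hX (i : Fin 2) : X i ∈ I := Ideal.subset_span ⟨i, rfl⟩
  have hprod (n : ℕ) (f : ℕ → MvPolynomial (Fin 2) ℂ) (hf : ∀ i, f i ∈ I) :
      ∏ i ∈ Finset.Icc 1 n, f i ∈ I ^ n := by
    simpa using Ideal.prod_mem_prod fun i (_ : i ∈ Finset.Icc 1 n) => hf i
  have hbase : X 0 * X 1 * (X 1 + X 0 ^ 2) ∈ I ^ 3 := by
    have hparabola : X 1 + X 0 ^ 2 ∈ I := I.add_mem (hX 1) (I.pow_mem_of_mem (hX 0) 2 two_pos)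
    simpa only [pow_succ, pow_zero, one_mul] using
      Ideal.mul_mem_mul (Ideal.mul_mem_mul (hX 0) (hX 1)) hparabola
  have ha := hprod (N - 1)
    (fun i => X 1 + ∑ k ∈ Finset.Icc 1 i, C (a k i) * X 0 * X 1 ^ (k - 1)) fun i =>
    I.add_mem (hX 1) <| I.sum_mem fun k _ => I.mul_mem_right _ <| I.mul_mem_left _ (hX 0)
  have hb := hprod (M - 2)
    (fun i => X 1 + ∑ k ∈ Finset.Icc 1 (N - 1 + 2 * i), C (b k i) * X 0 ^ (k + 1)) fun i =>
    I.add_mem (hX 1) <| I.sum_mem fun k _ =>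
      I.mul_mem_left _ (I.pow_mem_of_mem (hX 0) _ k.succ_pos)
  have hfactors : Npoly M N a b ∈ I ^ (3 + (N - 1) + (M - 2)) := by
    rw [pow_add, pow_add]
    exact Ideal.mul_mem_mul (Ideal.mul_mem_mul hbase ha) hb
  exact Ideal.pow_le_pow_right (show M + N ≤ 3 + (N - 1) + (M - 2) by omega) hfactors

/-- If `φ - id` vanishes to order at least `ν+1` at `0` (all Taylor terms of total
degree `≤ ν` of `φ - id` vanish) and `N_p ∘ φ = N_q` near `0`, then all coefficients of
`N_p - N_q` in degree `< M+N+ν` vanish; equivalently the homogeneous components satisfy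
`N_p^{(M+N+l)} = N_q^{(M+N+l)}` for `0 ≤ l ≤ ν-1`. -/
theorem stmt_4 (M N : ℕ) (hM : 2 ≤ M) (hN : 2 ≤ N) (a b a' b' : ℕ → ℕ → ℂ)
    (ν : ℕ) (hν : 1 ≤ ν)
    (U : Set (ℂ × ℂ)) (hU : IsOpen U) (h0U : (0 : ℂ × ℂ) ∈ U)
    (φ : ℂ × ℂ → ℂ × ℂ) (hφan : ∀ z ∈ U, AnalyticAt ℂ φ z) (hφ0 : φ 0 = 0)
    (hTaylor : ∀ n ≤ ν, iteratedFDeriv ℂ n (fun z : ℂ × ℂ => φ z - z) 0 = 0)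
    (hconj : ∀ z ∈ U, Nfun M N a b (φ z) = Nfun M N a' b' z) :
    (∀ d, d < M + N + ν →
        homogeneousComponent d (Npoly M N a b - Npoly M N a' b') = 0) ∧
      ∀ l, l ≤ ν - 1 →
        homogeneousComponent (M + N + l) (Npoly M N a b) =
          homogeneousComponent (M + N + l) (Npoly M N a' b') := by
  have hflat : (fun z => φ z - z) =O[𝓝 0] fun z => ‖z‖ ^ (ν + 1) := by
    simpa using isBigO_norm_pow_of_iteratedFDeriv_eq_zero ((hφan 0 h0U).sub analyticAt_id)
      fun n hn => hTaylor n (Nat.lt_succ_iff.1 hn)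
  have h (d : ℕ) (hd : d < M + N + ν) :
      homogeneousComponent d (Npoly M N a b) = homogeneousComponent d (Npoly M N a' b') :=
    let coords := (ContinuousLinearEquiv.finTwoArrow ℂ ℂ).symm
    stmt_4_general (ℓ := (coords : ℂ × ℂ →L[ℂ] Fin 2 → ℂ)) coords.surjective
      (Npoly_mem_pow_idealOfVars M N a b) hflat
      (Filter.eventually_of_mem (hU.mem_nhds h0U) hconj) hd
  exact ⟨fun d hd => by rw [map_sub, h d hd, sub_self], fun l hl => h _ (by omega)⟩
end

section
/- For every parameter p, substituting x = x₃ and y = x₃²y₃ (the chart V₃ of the composition of two blow-ups) yields the identity of polynomials N_p(x₃, x₃²y₃) = x₃^{2M+N}·y₃·(y₃+1)·∏_{i=1}^{N−1}(a_{1,i} + x₃y₃ + Σ_{k=2}^{i} a_{k,i}·x₃^{2k−2}·y₃^{k−1})·∏_{i=1}^{M−2}(y₃ + Σ_{k=1}^{N−1+2i} b_{k,i}·x₃^{k−1}). In particular, setting x₃ = 0 in the cofactor of x₃^{2M+N} gives the polynomial P(y₃) = y₃(y₃+1)·(∏_{j=1}^{N−1} a_{1,j})·∏_{j=1}^{M−2}(y₃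 + b_{1,j}). -/
open MvPolynomial

/-- The cofactor of `x₃^{2M+N}` in the chart `V₃`. -/
noncomputable def cofactorV3 (M N : ℕ) (a b : ℕ → ℕ → ℂ) : MvPolynomial (Fin 2) ℂ :=
  X 1 * (X 1 + 1) *
    (∏ i ∈ Finset.Icc 1 (N - 1),
      (C (a 1 i) + X 0 * X 1 +
        ∑ k ∈ Finset.Icc 2 i, C (a k i) * X 0 ^ (2 * k - 2) * X 1 ^ (k - 1))) *
    (∏ i ∈ Finset.Icc 1 (M - 2),
      (X 1 + ∑ k ∈ Finset.Icc 1 (N - 1 + 2 * i), C (b k i) * X 0 ^ (k - 1)))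

/-!
Under `x = x₃`, `y = x₃²y₃` the monomial `xy` acquires the factor `x₃³`, the factor `y + x²` and
each of the `M - 2` factors with coefficients `b` acquire `x₃²`, and each of the `N - 1` factors
with coefficients `a` acquires `x₃`; in total `3 + 2 + 2(M - 2) + (N - 1) = 2M + N`.
-/

section CommSemiring

variable {A : Type*} [CommSemiring A]

/-- The value at `(x, y)` of the normal form `N_p`, with parameters and coordinates in an arbitrary
commutative semiring; `Npoly` is the case of constant parameters and `(x, y) = (X 0, X 1)`. -/
def normalFormEval (M N : ℕ) (a b : ℕ → ℕ → A) (x y : A) : A :=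
  x * y * (y + x ^ 2) *
    (∏ i ∈ Finset.Icc 1 (N - 1), (y + ∑ k ∈ Finset.Icc 1 i, a k i * x * y ^ (k - 1))) *
    (∏ i ∈ Finset.Icc 1 (M - 2),
      (y + ∑ k ∈ Finset.Icc 1 (N - 1 + 2 * i), b k i * x ^ (k + 1)))

/-- The value at `(x₃, y₃) = (x, y)` of the cofactor of `x₃^{2M+N}` in the chart `V₃`, with
parameters and coordinates in an arbitrary commutative semiring; `cofactorV3` is the case of
constant parameters and `(x, y) = (X 0, X 1)`. -/
def cofactorV3Eval (M N : ℕ) (a b : ℕ → ℕ → A) (x y : A) : A :=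
  y * (y + 1) *
    (∏ i ∈ Finset.Icc 1 (N - 1),
      (a 1 i + x * y + ∑ k ∈ Finset.Icc 2 i, a k i * x ^ (2 * k - 2) * y ^ (k - 1))) *
    (∏ i ∈ Finset.Icc 1 (M - 2),
      (y + ∑ k ∈ Finset.Icc 1 (N - 1 + 2 * i), b k i * x ^ (k - 1)))

lemma aFactor_chartV3 {n : ℕ} (hn : 1 ≤ n) (c : ℕ → A) (x y : A) :
    x ^ 2 * y + ∑ k ∈ Finset.Icc 1 n, c k * x * (x ^ 2 * y) ^ (k - 1) =
      x * (c 1 + x * y + ∑ k ∈ Finset.Icc 2 n, c k * x ^ (2 * k - 2) * y ^ (k - 1)) := by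
  have term_eq (k : ℕ) : c k * x * (x ^ 2 * y) ^ (k - 1) =
      x * (c k * x ^ (2 * k - 2) * y ^ (k - 1)) := by
    rw [mul_pow, ← pow_mul, Nat.mul_sub_one]
    ring
  simp only [term_eq, ← Finset.mul_sum]
  rw [← Finset.add_sum_Ioc_eq_sum_Icc hn, ← Finset.Icc_add_one_left_eq_Ioc]
  simp only [Nat.sub_self, mul_one, pow_zero, Nat.reduceAdd]
  ring

lemma bFactor_chartV3 (n : ℕ) (c : ℕ → A) (x y : A) :
    x ^ 2 * y + ∑ k ∈ Finset.Icc 1 n, c k * x ^ (k + 1) =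
      x ^ 2 * (y + ∑ k ∈ Finset.Icc 1 n, c k * x ^ (k - 1)) := by
  rw [mul_add, Finset.mul_sum]
  congr 1
  refine Finset.sum_congr rfl fun k hk ↦ ?_
  have exponent_eq : k + 1 = 2 + (k - 1) := by grind
  rw [exponent_eq, pow_add, mul_left_comm]

lemma normalFormEval_chartV3 {M N : ℕ} (hM : 2 ≤ M) (hN : 1 ≤ N) (a b : ℕ → ℕ → A) (x y : A) :
    normalFormEval M N a b x (x ^ 2 * y) = x ^ (2 * M + N) * cofactorV3Eval M N a b x y := by
  have exponent_eq : 2 * M + N = 5 + (N - 1) + 2 * (M - 2) := by omega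
  unfold normalFormEval cofactorV3Eval
  rw [Finset.prod_congr rfl fun i hi ↦
      aFactor_chartV3 (Finset.mem_Icc.mp hi).1 (a · i) x y,
    Finset.prod_congr rfl fun i _ ↦ bFactor_chartV3 (N - 1 + 2 * i) (b · i) x y,
    ← Finset.pow_card_mul_prod, ← Finset.pow_card_mul_prod, Nat.card_Icc, Nat.card_Icc,
    Nat.add_sub_cancel, Nat.add_sub_cancel, exponent_eq]
  ring

lemma sum_Icc_two_mul_zero_pow (n : ℕ) (c : ℕ → A) (y : A) :
    ∑ k ∈ Finset.Icc 2 n, c k * 0 ^ (2 * k - 2) * y ^ (k - 1) = 0 := by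
  refine Finset.sum_eq_zero fun k hk ↦ ?_
  rw [zero_pow (by grind), mul_zero, zero_mul]

lemma sum_Icc_one_mul_zero_pow {n : ℕ} (hn : 1 ≤ n) (c : ℕ → A) :
    ∑ k ∈ Finset.Icc 1 n, c k * 0 ^ (k - 1) = c 1 := by
  rw [Finset.sum_eq_single_of_mem 1 (Finset.left_mem_Icc.mpr hn)]
  · rw [Nat.sub_self, pow_zero, mul_one]
  · intro k hk hk_ne
    rw [zero_pow (by grind), mul_zero]

lemma cofactorV3Eval_zero (M N : ℕ) (a b : ℕ → ℕ → A) (y : A) :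
    cofactorV3Eval M N a b 0 y =
      y * (y + 1) * (∏ j ∈ Finset.Icc 1 (N - 1), a 1 j) *
        ∏ j ∈ Finset.Icc 1 (M - 2), (y + b 1 j) := by
  simp only [cofactorV3Eval, sum_Icc_two_mul_zero_pow, zero_mul, add_zero]
  congr 1
  refine Finset.prod_congr rfl fun i hi ↦ ?_
  rw [sum_Icc_one_mul_zero_pow (by grind) (b · i)]

theorem stmt_9_general {M N : ℕ} (hM : 2 ≤ M) (hN : 1 ≤ N) (a b : ℕ → ℕ → A) (x y : A) :
    normalFormEval M N a b x (x ^ 2 * y) = x ^ (2 * M + N) * cofactorV3Eval M N a b x y ∧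
    cofactorV3Eval M N a b 0 y =
      y * (y + 1) * (∏ j ∈ Finset.Icc 1 (N - 1), a 1 j) *
        ∏ j ∈ Finset.Icc 1 (M - 2), (y + b 1 j) :=
  ⟨normalFormEval_chartV3 hM hN a b x y, cofactorV3Eval_zero M N a b y⟩

end CommSemiring

section Algebra

variable {A : Type*} [CommSemiring A] [Algebra ℂ A]

lemma aeval_Npoly (M N : ℕ) (a b : ℕ → ℕ → ℂ) (x y : A) :
    aeval ![x, y] (Npoly M N a b) =
      normalFormEval M N (fun k i ↦ algebraMap ℂ A (a k i)) (fun k i ↦ algebraMap ℂ A (b k i))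
        x y := by
  simp [Npoly, normalFormEval]

lemma aeval_cofactorV3 (M N : ℕ) (a b : ℕ → ℕ → ℂ) (x y : A) :
    aeval ![x, y] (cofactorV3 M N a b) =
      cofactorV3Eval M N (fun k i ↦ algebraMap ℂ A (a k i)) (fun k i ↦ algebraMap ℂ A (b k i))
        x y := by
  simp [cofactorV3, cofactorV3Eval]

end Algebra

/-- In the chart `V₃`, i.e. substituting `x = x₃`, `y = x₃²y₃`, the normal form becomes
`x₃^{2M+N}` times an explicit cofactor; setting `x₃ = 0` in the cofactor gives
`P(y₃) = y₃(y₃+1)·(∏ a_{1,j})·∏ (y₃ + b_{1,j})`. -/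
theorem stmt_9 (M N : ℕ) (hM : 2 ≤ M) (hN : 2 ≤ N) (a b : ℕ → ℕ → ℂ) :
    aeval ![(X 0 : MvPolynomial (Fin 2) ℂ), X 0 ^ 2 * X 1] (Npoly M N a b) =
      X 0 ^ (2 * M + N) * cofactorV3 M N a b ∧
    aeval ![(0 : MvPolynomial (Fin 2) ℂ), X 1] (cofactorV3 M N a b) =
      X 1 * (X 1 + 1) * C (∏ j ∈ Finset.Icc 1 (N - 1), a 1 j) *
        ∏ j ∈ Finset.Icc 1 (M - 2), (X 1 + C (b 1 j)) := by
  rw [aeval_Npoly, aeval_cofactorV3, map_prod]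
  exact stmt_9_general hM (Nat.one_le_of_lt hN) (fun k i ↦ C (a k i)) (fun k i ↦ C (b k i)) _ _
end

section
/- For every parameter p, the homogeneous component of N_p of lowest total degree is the component of degree M+N, and it equals N_p^{(M+N)}(x,y) = x·y^{M}·∏_{i=1}^{N−1}(y + a_{1,i}·x). Moreover, the homogeneous component of lowest total degree of the blown-up polynomial Ñ_p(x₁,y₁) = x₁·y₁·(y₁+x₁)·∏_{i=1}^{N−1}(y₁ + Σ_{k=1}^{i} a_{k,i}·x₁^{k−1}·y₁^{k−1})·∏_{i=1}^{M−2}(y₁ + Σ_{k=1}^{N−1+2i} b_{k,i}·x₁^{k}) is the component of degree M+1 (assuming all a_{1,i} ≠ 0), and it equals Ñ_p^{(M+1)}(x₁,y₁) = x₁·y₁·(y₁+x₁)·(∏_{j=1}^{N−1} a_{1,j})·∏_{i=1}^{M−2}(y₁ + b_{1,i}·x₁). -/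
open MvPolynomial

/-- The blown-up polynomial `Ñ_p`. -/
noncomputable def Ntilde (M N : ℕ) (a b : ℕ → ℕ → ℂ) : MvPolynomial (Fin 2) ℂ :=
  X 0 * X 1 * (X 1 + X 0) *
    (∏ i ∈ Finset.Icc 1 (N - 1),
      (X 1 + ∑ k ∈ Finset.Icc 1 i, C (a k i) * X 0 ^ (k - 1) * X 1 ^ (k - 1))) *
    (∏ i ∈ Finset.Icc 1 (M - 2),
      (X 1 + ∑ k ∈ Finset.Icc 1 (N - 1 + 2 * i), C (b k i) * X 0 ^ k))

/-!
Initial forms multiply: the lowest homogeneous component of a product is the product of the lowest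
homogeneous components of the factors, as long as the latter is nonzero. Both polynomials are
products, and the terms of least degree of each factor can be read off. A factor indexed by
`a` has initial form `y + a₁ x` before the blow-up and the constant `a₁` after it, so that the
blow-up lowers the degree by `N - 1` precisely when none of these constants vanishes.
-/

section InitialForm

variable {σ ι R : Type*} [CommSemiring R] {f f' g g' : MvPolynomial σ R} {d d' : ℕ}

/-- `HasInitialForm f d g` says that `f` is the sum of `g`, homogeneous of degree `d`, and of terms
of degree `> d`. The form `g` may be zero, so that initial forms add, and multiply even in the
presence of zero divisors; it is the lowest homogeneous component of `f` exactly when `g ≠ 0`. -/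
structure HasInitialForm (f : MvPolynomial σ R) (d : ℕ) (g : MvPolynomial σ R) : Prop where
  component_eq_zero_of_lt : ∀ e < d, homogeneousComponent e f = 0
  component_eq : homogeneousComponent d f = g

lemma coe_homogeneousComponent (n : ℕ) (f : MvPolynomial σ R) :
    (homogeneousComponent n f : MvPowerSeries σ R) =
      MvPowerSeries.homogeneousComponent n (f : MvPowerSeries σ R) := by
  ext m
  simp only [coeff_coe, coeff_homogeneousComponent, MvPowerSeries.coeff_homogeneousComponent]

lemma natCast_le_order_coe_iff :
    (d : ℕ∞) ≤ (f : MvPowerSeries σ R).order ↔ ∀ e < d, homogeneousComponent e f = 0 := by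
  refine ⟨fun h e he => coe_injective σ R ?_, fun h => MvPowerSeries.le_order fun m hm => ?_⟩
  · rw [coe_homogeneousComponent, coe_zero]
    exact MvPowerSeries.homogeneousComponent_of_lt_order_eq_zero
      ((Nat.cast_lt.2 he).trans_le h)
  · have hcoeff := congrArg (coeff m) (h m.degree (Nat.cast_lt.1 hm))
    rwa [coeff_homogeneousComponent, if_pos rfl, coeff_zero] at hcoeff

namespace HasInitialForm

lemma le_order (h : HasInitialForm f d g) : (d : ℕ∞) ≤ (f : MvPowerSeries σ R).order :=
  natCast_le_order_coe_iff.2 h.component_eq_zero_of_lt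

lemma of_isHomogeneous (hf : f.IsHomogeneous d) : HasInitialForm f d f where
  component_eq_zero_of_lt e he := by rw [homogeneousComponent_of_mem hf, if_neg he.ne]
  component_eq := homogeneousComponent_eq_self hf

lemma zero_of_isHomogeneous (hf : f.IsHomogeneous d') (hd : d < d') : HasInitialForm f d 0 where
  component_eq_zero_of_lt e he := by
    rw [homogeneousComponent_of_mem hf, if_neg (he.trans hd).ne]
  component_eq := by rw [homogeneousComponent_of_mem hf, if_neg hd.ne]

lemma add (h : HasInitialForm f d g) (h' : HasInitialForm f' d g') :
    HasInitialForm (f + f') d (g + g') where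
  component_eq_zero_of_lt e he := by
    rw [map_add, h.component_eq_zero_of_lt e he, h'.component_eq_zero_of_lt e he, add_zero]
  component_eq := by rw [map_add, h.component_eq, h'.component_eq]

lemma sum {s : Finset ι} {f g : ι → MvPolynomial σ R}
    (h : ∀ i ∈ s, HasInitialForm (f i) d (g i)) :
    HasInitialForm (∑ i ∈ s, f i) d (∑ i ∈ s, g i) where
  component_eq_zero_of_lt e he := by
    rw [map_sum, Finset.sum_eq_zero fun i hi => (h i hi).component_eq_zero_of_lt e he]
  component_eq := by
    rw [map_sum, Finset.sum_congr rfl fun i hi => (h i hi).component_eq]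

lemma sum_of_isHomogeneous {s : Finset ι} {f : ι → MvPolynomial σ R} {e : ι → ℕ} {i₀ : ι}
    (hi₀ : i₀ ∈ s) (hf : ∀ i ∈ s, (f i).IsHomogeneous (e i))
    (he : ∀ i ∈ s, i ≠ i₀ → e i₀ < e i) :
    HasInitialForm (∑ i ∈ s, f i) (e i₀) (f i₀) := by
  classical
  have hrest : HasInitialForm (∑ i ∈ s.erase i₀, f i) (e i₀) (∑ _i ∈ s.erase i₀, 0) := by
    refine sum fun i hi => ?_
    obtain ⟨hne, his⟩ := Finset.mem_erase.1 hi
    exact zero_of_isHomogeneous (hf i his) (he i his hne)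
  simpa only [Finset.add_sum_erase s f hi₀, Finset.sum_const_zero, add_zero]
    using (of_isHomogeneous (hf i₀ hi₀)).add hrest

lemma mul (h : HasInitialForm f d g) (h' : HasInitialForm f' d' g') :
    HasInitialForm (f * f') (d + d') (g * g') where
  component_eq_zero_of_lt := by
    rw [← natCast_le_order_coe_iff, coe_mul, Nat.cast_add]
    exact (add_le_add h.le_order h'.le_order).trans MvPowerSeries.le_order_mul
  component_eq := coe_injective σ R <| by
    rw [coe_homogeneousComponent, coe_mul,
      MvPowerSeries.homogeneousComponent_mul_of_le_order h.le_order h'.le_order,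
      ← coe_homogeneousComponent, ← coe_homogeneousComponent, h.component_eq, h'.component_eq,
      coe_mul]

lemma prod {s : Finset ι} {f g : ι → MvPolynomial σ R} {d : ι → ℕ}
    (h : ∀ i ∈ s, HasInitialForm (f i) (d i) (g i)) :
    HasInitialForm (∏ i ∈ s, f i) (∑ i ∈ s, d i) (∏ i ∈ s, g i) := by
  induction s using Finset.cons_induction with
  | empty => exact of_isHomogeneous (isHomogeneous_one σ R)
  | cons i s hi ih =>
    rw [Finset.prod_cons, Finset.prod_cons, Finset.sum_cons]
    exact (h i (Finset.mem_cons_self i s)).mul (ih fun j hj => h j (Finset.mem_cons_of_mem hj))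

end HasInitialForm

end InitialForm

section Factors

variable {σ R : Type*} [CommSemiring R]

lemma hasInitialForm_X_add_sum_mul_X_mul_X_pow {n : ℕ} (hn : 1 ≤ n) (a : ℕ → R) (x y : σ) :
    HasInitialForm (X y + ∑ k ∈ Finset.Icc 1 n, C (a k) * X x * X y ^ (k - 1)) 1
      (X y + C (a 1) * X x) := by
  have hsum : HasInitialForm (∑ k ∈ Finset.Icc 1 n, C (a k) * X x * X y ^ (k - 1)) 1
      (C (a 1) * X x * X y ^ (1 - 1)) :=
    .sum_of_isHomogeneous (e := fun k => 1 + (k - 1)) (Finset.left_mem_Icc.2 hn)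
      (fun k _ => (isHomogeneous_C_mul_X (a k) x).mul (isHomogeneous_X_pow y (k - 1)))
      (fun k hk hne => by grind)
  simpa using (HasInitialForm.of_isHomogeneous (isHomogeneous_X R y)).add hsum

lemma hasInitialForm_X_add_sum_mul_X_pow_succ (n : ℕ) (b : ℕ → R) (x y : σ) :
    HasInitialForm (X y + ∑ k ∈ Finset.Icc 1 n, C (b k) * X x ^ (k + 1)) 1 (X y) := by
  have hsum : HasInitialForm (∑ k ∈ Finset.Icc 1 n, C (b k) * X x ^ (k + 1)) 1
      (∑ _k ∈ Finset.Icc 1 n, 0) :=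
    .sum fun _ hk =>
      .zero_of_isHomogeneous (isHomogeneous_C_mul_X_pow _ x _)
        (Nat.succ_lt_succ (Finset.mem_Icc.1 hk).1)
  simpa using (HasInitialForm.of_isHomogeneous (isHomogeneous_X R y)).add hsum

lemma hasInitialForm_X_add_sum_mul_X_pow_mul_X_pow {n : ℕ} (hn : 1 ≤ n) (a : ℕ → R) (x y : σ) :
    HasInitialForm (X y + ∑ k ∈ Finset.Icc 1 n, C (a k) * X x ^ (k - 1) * X y ^ (k - 1)) 0
      (C (a 1)) := by
  have hsum : HasInitialForm (∑ k ∈ Finset.Icc 1 n, C (a k) * X x ^ (k - 1) * X y ^ (k - 1)) 0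
      (C (a 1) * X x ^ (1 - 1) * X y ^ (1 - 1)) :=
    .sum_of_isHomogeneous (e := fun k => (k - 1) + (k - 1)) (Finset.left_mem_Icc.2 hn)
      (fun k _ => (isHomogeneous_C_mul_X_pow (a k) x (k - 1)).mul (isHomogeneous_X_pow y (k - 1)))
      (fun k hk hne => by grind)
  simpa using (HasInitialForm.zero_of_isHomogeneous (isHomogeneous_X R y) one_pos).add hsum

lemma hasInitialForm_X_add_sum_mul_X_pow {n : ℕ} (hn : 1 ≤ n) (b : ℕ → R) (x y : σ) :
    HasInitialForm (X y + ∑ k ∈ Finset.Icc 1 n, C (b k) * X x ^ k) 1 (X y + C (b 1) * X x) := by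
  have hsum : HasInitialForm (∑ k ∈ Finset.Icc 1 n, C (b k) * X x ^ k) 1 (C (b 1) * X x ^ 1) :=
    .sum_of_isHomogeneous (e := fun k => k) (Finset.left_mem_Icc.2 hn)
      (fun k _ => isHomogeneous_C_mul_X_pow (b k) x k)
      (fun k hk hne => by grind)
  simpa using (HasInitialForm.of_isHomogeneous (isHomogeneous_X R y)).add hsum

lemma X_add_C_mul_X_ne_zero [Nontrivial R] {x y : σ} (hxy : x ≠ y) (c : R) :
    (X y + C c * X x : MvPolynomial σ R) ≠ 0 := by
  classical
  refine ne_zero_iff.2 ⟨Finsupp.single y 1, ?_⟩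
  simp [coeff_X, Finsupp.single_left_inj, hxy]

end Factors

lemma hasInitialForm_Npoly {M N : ℕ} (hM : 2 ≤ M) (hN : 1 ≤ N) (a b : ℕ → ℕ → ℂ) :
    HasInitialForm (Npoly M N a b) (M + N)
      (X 0 * X 1 ^ M * ∏ i ∈ Finset.Icc 1 (N - 1), (X 1 + C (a 1 i) * X 0)) := by
  have hx := HasInitialForm.of_isHomogeneous (isHomogeneous_X ℂ (0 : Fin 2))
  have hy := HasInitialForm.of_isHomogeneous (isHomogeneous_X ℂ (1 : Fin 2))
  have hparabola := hy.add (.zero_of_isHomogeneous (isHomogeneous_X_pow 0 2) one_lt_two)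
  have hA := HasInitialForm.prod fun i (hi : i ∈ Finset.Icc 1 (N - 1)) =>
    hasInitialForm_X_add_sum_mul_X_mul_X_pow (Finset.mem_Icc.1 hi).1 (a · i) (0 : Fin 2) 1
  have hB := HasInitialForm.prod fun i (_ : i ∈ Finset.Icc 1 (M - 2)) =>
    hasInitialForm_X_add_sum_mul_X_pow_succ (N - 1 + 2 * i) (b · i) (0 : Fin 2) 1
  rw [Npoly]
  convert (((hx.mul hy).mul hparabola).mul hA).mul hB using 1
  · simp only [Finset.sum_const, Nat.card_Icc, smul_eq_mul]
    omega
  · obtain ⟨m, rfl⟩ := Nat.exists_eq_add_of_le hM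
    simp only [Finset.prod_const, Nat.card_Icc, add_tsub_cancel_left, add_tsub_cancel_right]
    ring

lemma hasInitialForm_Ntilde {M : ℕ} (hM : 2 ≤ M) (N : ℕ) (a b : ℕ → ℕ → ℂ) :
    HasInitialForm (Ntilde M N a b) (M + 1)
      (X 0 * X 1 * (X 1 + X 0) * C (∏ j ∈ Finset.Icc 1 (N - 1), a 1 j) *
        ∏ i ∈ Finset.Icc 1 (M - 2), (X 1 + C (b 1 i) * X 0)) := by
  have hx := HasInitialForm.of_isHomogeneous (isHomogeneous_X ℂ (0 : Fin 2))
  have hy := HasInitialForm.of_isHomogeneous (isHomogeneous_X ℂ (1 : Fin 2))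
  have hA := HasInitialForm.prod fun i (hi : i ∈ Finset.Icc 1 (N - 1)) =>
    hasInitialForm_X_add_sum_mul_X_pow_mul_X_pow (Finset.mem_Icc.1 hi).1 (a · i) (0 : Fin 2) 1
  have hB := HasInitialForm.prod fun i (hi : i ∈ Finset.Icc 1 (M - 2)) =>
    hasInitialForm_X_add_sum_mul_X_pow (n := N - 1 + 2 * i) (by grind) (b · i) (0 : Fin 2) 1
  rw [Ntilde]
  convert (((hx.mul hy).mul (hy.add hx)).mul hA).mul hB using 1
  · simp only [Finset.sum_const, Nat.card_Icc, smul_eq_mul]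
    omega
  · rw [map_prod]

theorem stmt_11_general {M N : ℕ} (hM : 2 ≤ M) (hN : 1 ≤ N) (a b : ℕ → ℕ → ℂ) :
    ((∀ d, d < M + N → homogeneousComponent d (Npoly M N a b) = 0) ∧
      homogeneousComponent (M + N) (Npoly M N a b) =
        X 0 * X 1 ^ M * ∏ i ∈ Finset.Icc 1 (N - 1), (X 1 + C (a 1 i) * X 0) ∧
      homogeneousComponent (M + N) (Npoly M N a b) ≠ 0) ∧
    ((∀ d, d < M + 1 → homogeneousComponent d (Ntilde M N a b) = 0) ∧
      homogeneousComponent (M + 1) (Ntilde M N a b) =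
        X 0 * X 1 * (X 1 + X 0) * C (∏ j ∈ Finset.Icc 1 (N - 1), a 1 j) *
          ∏ i ∈ Finset.Icc 1 (M - 2), (X 1 + C (b 1 i) * X 0) ∧
      (homogeneousComponent (M + 1) (Ntilde M N a b) ≠ 0 ↔
        ∀ i ∈ Finset.Icc 1 (N - 1), a 1 i ≠ 0)) := by
  obtain ⟨hNlow, hNform⟩ := hasInitialForm_Npoly hM hN a b
  obtain ⟨hTlow, hTform⟩ := hasInitialForm_Ntilde hM N a b
  have hline (c : ℂ) : (X 1 + C c * X 0 : MvPolynomial (Fin 2) ℂ) ≠ 0 :=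
    X_add_C_mul_X_ne_zero zero_ne_one c
  have hdiag : (X 1 + X 0 : MvPolynomial (Fin 2) ℂ) ≠ 0 := by simpa using hline 1
  refine ⟨⟨hNlow, hNform, ?_⟩, hTlow, hTform, ?_⟩
  · rw [hNform]
    exact mul_ne_zero (mul_ne_zero (X_ne_zero 0) (pow_ne_zero M (X_ne_zero 1)))
      (Finset.prod_ne_zero_iff.2 fun i _ => hline (a 1 i))
  · simp [hTform, hline, hdiag, Finset.prod_eq_zero_iff]

/-- The lowest homogeneous component of `N_p` is the component of degree `M+N`, equal to
`x·y^M·∏ (y + a_{1,i} x)`; the lowest homogeneous component of `Ñ_p` (assuming all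
`a_{1,i} ≠ 0`) is the component of degree `M+1`, equal to
`x₁·y₁·(y₁+x₁)·(∏ a_{1,j})·∏ (y₁ + b_{1,i} x₁)`. -/
theorem stmt_11 (M N : ℕ) (hM : 2 ≤ M) (hN : 2 ≤ N) (a b : ℕ → ℕ → ℂ)
    (ha : ∀ i ∈ Finset.Icc 1 (N - 1), a 1 i ≠ 0) :
    ((∀ d, d < M + N → homogeneousComponent d (Npoly M N a b) = 0) ∧
      homogeneousComponent (M + N) (Npoly M N a b) =
        X 0 * X 1 ^ M * ∏ i ∈ Finset.Icc 1 (N - 1), (X 1 + C (a 1 i) * X 0) ∧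
      homogeneousComponent (M + N) (Npoly M N a b) ≠ 0) ∧
    ((∀ d, d < M + 1 → homogeneousComponent d (Ntilde M N a b) = 0) ∧
      homogeneousComponent (M + 1) (Ntilde M N a b) =
        X 0 * X 1 * (X 1 + X 0) * C (∏ j ∈ Finset.Icc 1 (N - 1), a 1 j) *
          ∏ i ∈ Finset.Icc 1 (M - 2), (X 1 + C (b 1 i) * X 0) ∧
      homogeneousComponent (M + 1) (Ntilde M N a b) ≠ 0) := by
  obtain ⟨hNpoly, hlow, hform, hne⟩ := stmt_11_general hM (Nat.one_le_of_lt hN) a b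
  exact ⟨hNpoly, hlow, hform, hne.2 ha⟩
end

section
/- Let M ≥ 2 and N ≥ 2 be integers and let a₁,…,a_{N−1} be pairwise distinct nonzero complex numbers. Define κ_i = (−1)^{N}·a_i^{N−1}/∏_{j≠i}(1 − a_j/a_i) and β = 1/((2M+N)·∏_{j=1}^{N−1} a_j). Let M₁ be the (N−1)×(N−1) complex matrix whose (j,i) entry is m_{ji} = (−1)^{N+j}·κ_i/((M+N)·a_i^{N+j}) for 1 ≤ j ≤ N−2, and whose last row is m_{(N−1)i} = (1/(M+N))·(−κ_i/a_i^{2N−1} − β/a_i). Then det(M₁) = ((−1)^{N²−1}/(M+N)^{N−1})·((2M+2N−1)/(2M+N))·∏_{i=1}^{N−1}(κ_i/a_i^{N+1})·∏_{1≤i<j≤N−1}(1/a_i − 1/a_j). In particular M₁ is invertible. -/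
/-!
Put `y i = -1 / a i`. Up to a scalar and a rescaling of its columns, `M₁` is the transpose of the
Vandermonde matrix of `y`, except that in its last column `y i ^ (N - 2)` is replaced by
`y i ^ (N - 2) + γ * ω'(y i)`, where `ω = ∏ l, (X - y l)` and `γ = 1 / (2 * M + N)`.
As `ω'` has degree at most `N - 2` with `N - 1` as its coefficient in that degree, evaluating these
polynomials at the nodes only multiplies the Vandermonde determinant by `1 + (N - 1) * γ`.
The choice of nodes `-1 / a i` rather than `1 / a i` absorbs the alternating signs of the rows.
-/

open Finset Matrix Polynomial

section CommRing

variable {R : Type*} [CommRing R] {n : ℕ}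

theorem det_eval_eq_prod_coeff_mul_det_vandermonde (v : Fin n → R) (p : Fin n → R[X])
    (hp : ∀ j, (p j).natDegree ≤ j) :
    (of fun i j => (p j).eval (v i)).det = (∏ j, (p j).coeff j) * (vandermonde v).det := by
  rw [eval_matrixOfPolynomials_eq_vandermonde_mul_matrixOfPolynomials v p hp, det_mul, mul_comm,
    det_of_isUpperTriangular]
  · simp only [of_apply]
  · exact fun i j hji => coeff_eq_zero_of_natDegree_lt ((hp j).trans_lt hji)

theorem det_vandermonde_eq_prod_filter_lt (v : Fin n → R) :
    (vandermonde v).det = ∏ p : Fin n × Fin n with p.1 < p.2, (v p.2 - v p.1) := by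
  rw [det_vandermonde]
  exact (prod_finset_product' _ univ Ioi (by simp)).symm

/-- The Vandermonde matrix of the nodes `v` whose last column, the values of `X ^ (n - 1)`, is
changed into the values of `X ^ (n - 1) + γ * ω'`, with `ω` the monic polynomial vanishing at the
nodes; `ω' (v i)` is spelled out as `∏ l ≠ i, (v i - v l)`. -/
def nodalVandermonde (v : Fin n → R) (γ : R) : Matrix (Fin n) (Fin n) R :=
  of fun i j => v i ^ (j : ℕ) + if (j : ℕ) + 1 = n then γ * ∏ l ∈ univ.erase i, (v i - v l) else 0

theorem natDegree_derivative_nodal_le (v : Fin n → R) :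
    (derivative (Lagrange.nodal univ v)).natDegree ≤ n - 1 := by
  nontriviality R
  simpa using natDegree_derivative_le (Lagrange.nodal univ v)

theorem coeff_derivative_nodal (v : Fin (n + 1) → R) :
    (derivative (Lagrange.nodal univ v)).coeff n = n + 1 := by
  nontriviality R
  have hlead : (Lagrange.nodal univ v).coeff (n + 1) = 1 := by
    simpa [Monic, leadingCoeff] using (Lagrange.nodal_monic : (Lagrange.nodal univ v).Monic)
  rw [coeff_derivative, hlead, one_mul]

theorem det_nodalVandermonde (v : Fin n → R) (γ : R) :
    (nodalVandermonde v γ).det = (1 + n * γ) * (vandermonde v).det := by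
  let p (j : Fin n) : R[X] :=
    X ^ (j : ℕ) + if (j : ℕ) + 1 = n then C γ * derivative (Lagrange.nodal univ v) else 0
  have hdeg (j : Fin n) : (p j).natDegree ≤ j := by
    refine natDegree_add_le_of_degree_le (natDegree_X_pow_le _) ?_
    split_ifs with hj
    · exact (natDegree_C_mul_le _ _).trans ((natDegree_derivative_nodal_le v).trans (by lia))
    · simp
  have heval : nodalVandermonde v γ = of fun i j => (p j).eval (v i) := by
    ext i j
    simp only [nodalVandermonde, of_apply, p, eval_add, eval_pow, eval_X]
    split_ifs
    · rw [eval_mul, eval_C, Lagrange.eval_nodal_derivative_eval_node_eq (mem_univ i),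
        Lagrange.eval_nodal]
    · rw [eval_zero]
  have hcoeff : ∏ j, (p j).coeff j = 1 + n * γ := by
    cases n with
    | zero => simp
    | succ n =>
      rw [Fin.prod_univ_castSucc, prod_eq_one, one_mul]
      · simp [p, coeff_derivative_nodal, mul_comm]
      · intro j _
        simp [p, j.isLt.ne]
  rw [heval, det_eval_eq_prod_coeff_mul_det_vandermonde v p hdeg, hcoeff]

end CommRing

section Field

variable {K ι : Type*} [Field K] [DecidableEq ι] {s : Finset ι} {a : ι → K} {i : ι}

theorem prod_erase_one_sub_div_ne_zero (ha : Set.InjOn a s) (hi : i ∈ s) (hai : a i ≠ 0) :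
    ∏ l ∈ s.erase i, (1 - a l / a i) ≠ 0 := by
  refine prod_ne_zero_iff.mpr fun l hl h => ne_of_mem_erase hl (ha (mem_of_mem_erase hl) hi ?_)
  exact (div_eq_one_iff_eq hai).mp (sub_eq_zero.mp h).symm

theorem prod_mul_prod_erase_neg_inv_sub_neg_inv (ha : ∀ l ∈ s, a l ≠ 0) (hi : i ∈ s) :
    (∏ l ∈ s, a l) * ∏ l ∈ s.erase i, (-(a i)⁻¹ - -(a l)⁻¹) =
      a i * ∏ l ∈ s.erase i, (1 - a l / a i) := by
  rw [← mul_prod_erase s a hi, mul_assoc, ← prod_mul_distrib]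
  refine congrArg (a i * ·) (prod_congr rfl fun l hl => ?_)
  have := ha l (mem_of_mem_erase hl)
  have := ha i hi
  field_simp
  ring

end Field

section Cocycle

variable {K : Type*} [Field K] {N : ℕ} {a : Fin (N - 1) → K}

/-- The numbers `κ_i` of the paper, values at `-a i` of the reversed Bézout cofactor of
`X * ∏ j, (1 + a j * X)`, in closed form. -/
def kappa (a : Fin (N - 1) → K) (i : Fin (N - 1)) : K :=
  (-1) ^ N * a i ^ (N - 1) / ∏ j ∈ univ.erase i, (1 - a j / a i)

theorem kappa_mul_prod_erase (ha0 : ∀ i, a i ≠ 0) (hainj : Function.Injective a)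
    (i : Fin (N - 1)) :
    kappa a i * ∏ l ∈ univ.erase i, (-(a i)⁻¹ - -(a l)⁻¹) = (-1) ^ N * a i ^ N / ∏ l, a l := by
  have hN : N ≠ 0 := by have := i.isLt; lia
  have hprod : ∏ l, a l ≠ 0 := prod_ne_zero_iff.mpr fun l _ => ha0 l
  rw [eq_div_iff hprod, mul_assoc, mul_comm (∏ l ∈ _, _),
    prod_mul_prod_erase_neg_inv_sub_neg_inv (fun l _ => ha0 l) (mem_univ i), kappa, mul_left_comm,
    div_mul_cancel₀ _ (prod_erase_one_sub_div_ne_zero hainj.injOn (mem_univ i) (ha0 i)),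
    mul_left_comm, mul_pow_sub_one hN]

theorem kappa_ne_zero (ha0 : ∀ i, a i ≠ 0) (hainj : Function.Injective a)
    (i : Fin (N - 1)) : kappa a i ≠ 0 := by
  refine left_ne_zero_of_mul (b := ∏ l ∈ univ.erase i, (-(a i)⁻¹ - -(a l)⁻¹)) ?_
  rw [kappa_mul_prod_erase ha0 hainj i]
  simp [ha0, prod_ne_zero_iff]

/-- The matrix `M₁` with `c` in place of `M + N` and `γ / ∏ l, a l` in place of `β`. -/
def cocycleMatrix (a : Fin (N - 1) → K) (c γ : K) : Matrix (Fin (N - 1)) (Fin (N - 1)) K :=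
  of fun j i =>
    if (j : ℕ) + 1 ≤ N - 2 then
      (-1) ^ (N + ((j : ℕ) + 1)) * kappa a i / (c * a i ^ (N + ((j : ℕ) + 1)))
    else (1 / c) * (-kappa a i / a i ^ (2 * N - 1) - γ / (∏ l, a l) / a i)

theorem cocycleMatrix_eq_smul_transpose_nodalVandermonde_mul_diagonal (ha0 : ∀ i, a i ≠ 0)
    (hainj : Function.Injective a) (c γ : K) :
    cocycleMatrix a c γ = ((-1) ^ (N + 1) / c) •
      ((nodalVandermonde (fun i => -(a i)⁻¹) γ)ᵀ *
        diagonal fun i => kappa a i / a i ^ (N + 1)) := by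
  ext j i
  have hmonomial : (-1) ^ (N + 1) / c * ((-(a i)⁻¹) ^ (j : ℕ) * (kappa a i / a i ^ (N + 1))) =
      (-1) ^ (N + ((j : ℕ) + 1)) * kappa a i / (c * a i ^ (N + ((j : ℕ) + 1))) := by
    rw [neg_pow (a i)⁻¹]
    ring
  rw [cocycleMatrix, of_apply, Matrix.smul_apply, mul_diagonal, transpose_apply, nodalVandermonde,
    of_apply, smul_eq_mul, add_mul, mul_add, hmonomial]
  by_cases hj : (j : ℕ) + 1 = N - 1
  · have hexp : N + ((j : ℕ) + 1) = 2 * N - 1 := by lia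
    have hodd : Odd (2 * N - 1) := ⟨N - 1, by lia⟩
    have hnodal : (-1) ^ (N + 1) / c *
        ((γ * ∏ l ∈ univ.erase i, (-(a i)⁻¹ - -(a l)⁻¹)) * (kappa a i / a i ^ (N + 1))) =
          -(1 / c * (γ / (∏ l, a l) / a i)) := by
      calc
        _ = (-1) ^ (N + 1) / c * γ / a i ^ (N + 1) *
            (kappa a i * ∏ l ∈ univ.erase i, (-(a i)⁻¹ - -(a l)⁻¹)) := by ring
        _ = (-1) ^ (N + 1) * (-1) ^ N * (1 / c * (γ / (∏ l, a l) / a i)) := by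
          rw [kappa_mul_prod_erase ha0 hainj i, pow_succ (a i)]
          have := ha0 i
          field_simp
        _ = _ := by rw [← pow_add, Odd.neg_one_pow ⟨N, by lia⟩, neg_one_mul]
    rw [if_neg (by lia), if_pos hj, hexp, hodd.neg_one_pow, hnodal]
    ring
  · rw [if_pos (by lia), if_neg hj, zero_mul, mul_zero, add_zero]

theorem det_cocycleMatrix (ha0 : ∀ i, a i ≠ 0) (hainj : Function.Injective a) (hN : 1 ≤ N)
    (c γ : K) :
    (cocycleMatrix a c γ).det =
      ((-1) ^ (N ^ 2 - 1) / c ^ (N - 1)) * (1 + (N - 1) * γ) *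
        (∏ i, kappa a i / a i ^ (N + 1)) *
        (∏ p : Fin (N - 1) × Fin (N - 1) with p.1 < p.2, (1 / a p.1 - 1 / a p.2)) := by
  have hsign : ((-1 : K) ^ (N + 1)) ^ (N - 1) = (-1) ^ (N ^ 2 - 1) := by
    rw [← pow_mul, ← Nat.sq_sub_sq, one_pow]
  rw [cocycleMatrix_eq_smul_transpose_nodalVandermonde_mul_diagonal ha0 hainj, det_smul,
    det_mul, det_transpose, det_nodalVandermonde, det_diagonal, det_vandermonde_eq_prod_filter_lt,
    Fintype.card_fin, div_pow, hsign, Nat.cast_pred hN]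
  simp only [one_div, neg_sub_neg]
  ring

theorem isUnit_cocycleMatrix_iff (ha0 : ∀ i, a i ≠ 0) (hainj : Function.Injective a) (hN : 1 ≤ N)
    {c : K} (hc : c ≠ 0) (γ : K) :
    IsUnit (cocycleMatrix a c γ) ↔ 1 + (N - 1) * γ ≠ 0 := by
  have hcolumns : ∏ i, kappa a i / a i ^ (N + 1) ≠ 0 :=
    prod_ne_zero_iff.mpr fun i _ =>
      div_ne_zero (kappa_ne_zero ha0 hainj i) (pow_ne_zero _ (ha0 i))
  have hdiff : ∏ p : Fin (N - 1) × Fin (N - 1) with p.1 < p.2, (1 / a p.1 - 1 / a p.2) ≠ 0 := by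
    refine prod_ne_zero_iff.mpr fun p hp => ?_
    rw [one_div, one_div, sub_ne_zero, inv_injective.ne_iff, hainj.ne_iff]
    exact (mem_filter.mp hp).2.ne
  have hscalar : (-1 : K) ^ (N ^ 2 - 1) / c ^ (N - 1) ≠ 0 :=
    div_ne_zero (pow_ne_zero _ (neg_ne_zero.mpr one_ne_zero)) (pow_ne_zero _ hc)
  rw [isUnit_iff_isUnit_det, isUnit_iff_ne_zero, det_cocycleMatrix ha0 hainj hN,
    mul_ne_zero_iff_right hdiff, mul_ne_zero_iff_right hcolumns, mul_ne_zero_iff_left hscalar]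

end Cocycle

theorem stmt_16_general {K : Type*} [Field K] (m : K) (N : ℕ) (hN : 1 ≤ N) (a : Fin (N - 1) → K)
    (ha0 : ∀ i, a i ≠ 0) (hainj : Function.Injective a)
    (κ : Fin (N - 1) → K)
    (hκ : ∀ i, κ i = (-1) ^ N * a i ^ (N - 1) / ∏ j ∈ univ.erase i, (1 - a j / a i))
    (hmN : m + N ≠ 0) (h2mN : 2 * m + N ≠ 0)
    (β : K) (hβ : β = 1 / ((2 * m + N) * ∏ j, a j))
    (M₁ : Matrix (Fin (N - 1)) (Fin (N - 1)) K)
    (hM₁ : ∀ j i, M₁ j i =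
      if (j : ℕ) + 1 ≤ N - 2 then
        (-1) ^ (N + ((j : ℕ) + 1)) * κ i / ((m + N) * a i ^ (N + ((j : ℕ) + 1)))
      else (1 / (m + N)) * (-κ i / a i ^ (2 * N - 1) - β / a i)) :
    M₁.det =
        ((-1) ^ (N ^ 2 - 1) / (m + N) ^ (N - 1)) * ((2 * m + 2 * N - 1) / (2 * m + N)) *
          (∏ i, κ i / a i ^ (N + 1)) *
          (∏ p : Fin (N - 1) × Fin (N - 1) with p.1 < p.2, (1 / a p.1 - 1 / a p.2)) ∧
      (IsUnit M₁ ↔ 2 * m + 2 * N - 1 ≠ 0) := by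
  obtain rfl : κ = kappa a := funext hκ
  obtain rfl : β = 1 / (2 * m + N) / ∏ j, a j := by rw [hβ, div_div]
  obtain rfl : M₁ = cocycleMatrix a (m + N) (1 / (2 * m + N)) := Matrix.ext hM₁
  have hγ : 1 + (N - 1) * (1 / (2 * m + N)) = (2 * m + 2 * N - 1) / (2 * m + N) := by
    field_simp
    ring
  rw [det_cocycleMatrix ha0 hainj hN, isUnit_cocycleMatrix_iff ha0 hainj hN hmN, hγ,
    div_ne_zero_iff, and_iff_left h2mN]
  exact ⟨rfl, Iff.rfl⟩

/-- The matrix `M₁` of the paper: rows `j = 1, …, N-2` have entries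
`(-1)^{N+j}·κ_i/((M+N)·a_i^{N+j})` and the last row `j = N-1` has entries
`(1/(M+N))·(-κ_i/a_i^{2N-1} - β/a_i)`, where
`κ_i = (-1)^N·a_i^{N-1}/∏_{j≠i}(1 - a_j/a_i)` and `β = 1/((2M+N)·∏ a_j)`.
Its determinant is
`((-1)^{N²-1}/(M+N)^{N-1})·((2M+2N-1)/(2M+N))·∏ κ_i/a_i^{N+1}·∏_{i<j}(1/a_i - 1/a_j)`;
in particular `M₁` is invertible. -/
theorem stmt_16 (M N : ℕ) (hM : 2 ≤ M) (hN : 2 ≤ N) (a : Fin (N - 1) → ℂ)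
    (ha0 : ∀ i, a i ≠ 0) (hainj : Function.Injective a)
    (κ : Fin (N - 1) → ℂ)
    (hκ : ∀ i, κ i = (-1 : ℂ) ^ N * a i ^ (N - 1) /
      ∏ j ∈ Finset.univ.erase i, (1 - a j / a i))
    (β : ℂ) (hβ : β = 1 / ((2 * M + N : ℂ) * ∏ j, a j))
    (M₁ : Matrix (Fin (N - 1)) (Fin (N - 1)) ℂ)
    (hM₁ : ∀ j i, M₁ j i =
      if (j : ℕ) + 1 ≤ N - 2 then
        (-1 : ℂ) ^ (N + ((j : ℕ) + 1)) * κ i / ((M + N : ℂ) * a i ^ (N + ((j : ℕ) + 1)))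
      else (1 / (M + N : ℂ)) * (-κ i / a i ^ (2 * N - 1) - β / a i)) :
    M₁.det =
        ((-1 : ℂ) ^ (N ^ 2 - 1) / (M + N : ℂ) ^ (N - 1)) *
          ((2 * M + 2 * N - 1 : ℂ) / (2 * M + N : ℂ)) *
          (∏ i, κ i / a i ^ (N + 1)) *
          (∏ p ∈ Finset.univ.filter (fun p : Fin (N - 1) × Fin (N - 1) => p.1 < p.2),
            (1 / a p.1 - 1 / a p.2)) ∧
      IsUnit M₁ := by
  have h := stmt_16_general (M : ℂ) N (by lia) a ha0 hainj κ hκ (by norm_cast; lia)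
    (by norm_cast; lia) β hβ M₁ hM₁
  exact ⟨h.1, h.2.mpr (sub_ne_zero.mpr (by norm_cast; lia))⟩
end
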